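/- arXiv:2309.02988 — 5 statements merged into one kernel-verified Lean document; each statement's English description precedes it below -/
import Mathlib

section
/- Let 0 < α < 1, T > 0, and let v : [0,T] → ℝ be continuously differentiable. Then for every t ∈ (0,T), the left Riemann–Liouville derivatives of v and of v² of order α exist at t and satisfy (D_{0+}^α (v²))(t) ≤ 2 v(t) · (D_{0+}^α v)(t). -/
/-- The Riemann–Liouville kernel `ω_β(t) = t^(β-1) / Γ(β)`. -/
noncomputable def rlKernel (β t : ℝ) : ℝ := t ^ (β - 1) / Real.Gamma β

open Set Filter Topology MeasureTheory

/-- The kernel `(1 - x) ^ (-α)` is integrable against continuous functions on `[0, 1]`. -/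
lemma intervalIntegrable_one_sub_rpow_mul {α : ℝ} (hα1 : α < 1) {g : ℝ → ℝ}
    (hg : ContinuousOn g (Icc 0 1)) :
    IntervalIntegrable (fun x : ℝ => (1 - x) ^ (-α) * g x) volume 0 1 := by
  have h : IntervalIntegrable (fun x : ℝ => (1 - x) ^ (-α)) volume 0 1 := by
    have := (intervalIntegral.intervalIntegrable_rpow' (a := 1) (b := 0) (r := -α)
      (by linarith)).comp_sub_left 1
    simpa using this
  exact h.mul_continuousOn (by rwa [uIcc_of_le zero_le_one])

lemma mapsTo_mul_left_Icc {T τ : ℝ} (hτ : τ ∈ Icc 0 T) :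
    MapsTo (fun x => τ * x) (Icc 0 1) (Icc 0 T) := fun _ hx =>
  ⟨mul_nonneg hτ.1 hx.1, (mul_le_of_le_one_right hτ.1 hx.2).trans hτ.2⟩

lemma continuousOn_comp_mul_left {f : ℝ → ℝ} {T τ : ℝ} (hf : ContinuousOn f (Icc 0 T))
    (hτ : τ ∈ Icc 0 T) : ContinuousOn (fun x => f (τ * x)) (Icc 0 1) :=
  hf.comp (by fun_prop) (mapsTo_mul_left_Icc hτ)

/-- Rescaling the fractional integral to the unit interval. -/
lemma integral_rlKernel_mul_eq (α : ℝ) (f : ℝ → ℝ) {τ : ℝ} (hτ : 0 < τ) :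
    ∫ s in (0:ℝ)..τ, rlKernel (1 - α) (τ - s) * f s =
      τ ^ (1 - α) / Real.Gamma (1 - α) * ∫ x in (0:ℝ)..1, (1 - x) ^ (-α) * f (τ * x) := by
  have h := intervalIntegral.smul_integral_comp_mul_left (a := 0) (b := 1)
    (f := fun s => rlKernel (1 - α) (τ - s) * f s) τ
  rw [mul_zero, mul_one] at h
  rw [← h, smul_eq_mul, ← intervalIntegral.integral_const_mul,
    ← intervalIntegral.integral_const_mul]
  refine intervalIntegral.integral_congr fun x hx => ?_
  rw [uIcc_of_le zero_le_one] at hx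
  simp only [rlKernel]
  rw [show τ - τ * x = τ * (1 - x) by ring, show 1 - α - 1 = -α by ring,
    Real.mul_rpow hτ.le (by linarith [hx.2]), show 1 - α = 1 + -α by ring,
    Real.rpow_add hτ, Real.rpow_one]
  ring

/-- The Riemann–Liouville derivative of a continuously differentiable function, written as an
integral over the unit interval. -/
lemma hasDerivAt_integral_rlKernel_mul {α T : ℝ} (hα1 : α < 1) {f f' : ℝ → ℝ}
    (hf : ContinuousOn f (Icc 0 T)) (hf' : ContinuousOn f' (Icc 0 T))
    (hd : ∀ s ∈ Ioo 0 T, HasDerivAt f (f' s) s) {t : ℝ} (ht : t ∈ Ioo 0 T) :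
    HasDerivAt (fun τ => ∫ s in (0:ℝ)..τ, rlKernel (1 - α) (τ - s) * f s)
      (t ^ (-α) / Real.Gamma (1 - α) *
        ∫ x in (0:ℝ)..1, (1 - x) ^ (-α) * ((1 - α) * f (t * x) + t * x * f' (t * x))) t := by
  have hIcc : t ∈ Icc 0 T := Ioo_subset_Icc_self ht
  have hnhds : Ioo 0 T ∈ 𝓝 t := Ioo_mem_nhds ht.1 ht.2
  obtain ⟨C, hC⟩ := isCompact_Icc.exists_bound_of_continuousOn hf'
  have hmem : ∀ τ ∈ Ioo 0 T, ∀ x ∈ Ioc (0:ℝ) 1, τ * x ∈ Ioo 0 T := fun τ hτ x hx =>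
    ⟨mul_pos hτ.1 hx.1, (mul_le_of_le_one_right hτ.1.le hx.2).trans_lt hτ.2⟩
  have hint := intervalIntegrable_one_sub_rpow_mul hα1 (continuousOn_comp_mul_left hf hIcc)
  have hint' := intervalIntegrable_one_sub_rpow_mul (g := fun x => x * f' (t * x)) hα1
    (continuousOn_id.mul (continuousOn_comp_mul_left hf' hIcc))
  have hG : HasDerivAt (fun τ => ∫ x in (0:ℝ)..1, (1 - x) ^ (-α) * f (τ * x))
      (∫ x in (0:ℝ)..1, (1 - x) ^ (-α) * (x * f' (t * x))) t := by
    refine (intervalIntegral.hasDerivAt_integral_of_dominated_loc_of_deriv_le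
      (F' := fun τ x => (1 - x) ^ (-α) * (x * f' (τ * x)))
      (bound := fun x => (1 - x) ^ (-α) * C) hnhds ?_ hint ?_ ?_
      (intervalIntegrable_one_sub_rpow_mul hα1 continuousOn_const) ?_).2
    · filter_upwards [hnhds] with τ hτ
      exact (intervalIntegrable_one_sub_rpow_mul hα1
        (continuousOn_comp_mul_left hf (Ioo_subset_Icc_self hτ))).aestronglyMeasurable_restrict_uIoc
    · exact hint'.aestronglyMeasurable_restrict_uIoc
    · refine ae_of_all _ fun x hx τ hτ => ?_
      rw [uIoc_of_le zero_le_one] at hx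
      have hb := hC _ (Ioo_subset_Icc_self (hmem τ hτ x hx))
      have h0 : 0 ≤ (1 - x) ^ (-α) := Real.rpow_nonneg (by linarith [hx.2]) _
      rw [norm_mul, Real.norm_of_nonneg h0, norm_mul, Real.norm_of_nonneg hx.1.le]
      refine mul_le_mul_of_nonneg_left ?_ h0
      exact (mul_le_of_le_one_left (norm_nonneg _) hx.2).trans hb
    · refine ae_of_all _ fun x hx τ hτ => ?_
      rw [uIoc_of_le zero_le_one] at hx
      have h1 : HasDerivAt (fun τ : ℝ => τ * x) x τ := by
        simpa using (hasDerivAt_id τ).mul_const x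
      have h2 := ((hd _ (hmem τ hτ x hx)).comp τ h1).const_mul ((1 - x) ^ (-α))
      exact h2.congr_deriv (by ring)
  have hpow : HasDerivAt (fun τ : ℝ => τ ^ (1 - α) / Real.Gamma (1 - α))
      ((1 - α) * t ^ (-α) / Real.Gamma (1 - α)) t := by
    have h := (Real.hasDerivAt_rpow_const (p := 1 - α) (Or.inl ht.1.ne')).div_const
      (Real.Gamma (1 - α))
    rwa [show 1 - α - 1 = -α by ring] at h
  have hev : (fun τ => ∫ s in (0:ℝ)..τ, rlKernel (1 - α) (τ - s) * f s) =ᶠ[𝓝 t]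
      fun τ => τ ^ (1 - α) / Real.Gamma (1 - α) *
        ∫ x in (0:ℝ)..1, (1 - x) ^ (-α) * f (τ * x) := by
    filter_upwards [hnhds] with τ hτ
    exact integral_rlKernel_mul_eq α f hτ.1
  refine ((hpow.mul hG).congr_of_eventuallyEq hev).congr_deriv ?_
  have hsplit : ∫ x in (0:ℝ)..1, (1 - x) ^ (-α) * ((1 - α) * f (t * x) + t * x * f' (t * x)) =
      (1 - α) * (∫ x in (0:ℝ)..1, (1 - x) ^ (-α) * f (t * x)) +
        t * ∫ x in (0:ℝ)..1, (1 - x) ^ (-α) * (x * f' (t * x)) := by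
    rw [← intervalIntegral.integral_const_mul, ← intervalIntegral.integral_const_mul,
      ← intervalIntegral.integral_add (hint.const_mul _) (hint'.const_mul _)]
    exact intervalIntegral.integral_congr fun x _ => by ring
  rw [hsplit, show 1 - α = 1 + -α by ring, Real.rpow_add ht.1, Real.rpow_one]
  ring

/-- If `w` vanishes at `1` and is differentiable there, then `x (1 - x) ^ (-α) w(x) ^ 2` is
continuous up to `1`. -/
lemma continuousOn_mul_one_sub_rpow_mul_sq {α : ℝ} (hα1 : α < 1) {w : ℝ → ℝ}
    (hw : ContinuousOn w (Icc 0 1)) (hw1 : w 1 = 0) (hd : DifferentiableAt ℝ w 1) :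
    ContinuousOn (fun x : ℝ => x * (1 - x) ^ (-α) * w x ^ 2) (Icc 0 1) := by
  have hslope : ContinuousOn (dslope w 1) (Icc 0 1) := by
    intro x hx
    rcases eq_or_ne x 1 with rfl | hne
    · exact (continuousAt_dslope_same.2 hd).continuousWithinAt
    · exact (continuousWithinAt_dslope_of_ne hne).2 (hw x hx)
  have hpow : ContinuousOn (fun x : ℝ => (1 - x) ^ (1 - α)) (Icc 0 1) :=
    ContinuousOn.rpow_const (by fun_prop) fun _ _ => Or.inr (by linarith)
  refine (((continuousOn_id.mul hpow).mul hslope).mul hw).neg.congr fun x hx => ?_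
  rcases hx.2.eq_or_lt with rfl | hlt
  · simp [hw1]
  · have hpos : 0 < 1 - x := by linarith
    have hne : x - 1 ≠ 0 := by linarith
    have hdw : dslope w 1 x = w x / (x - 1) := by
      rw [dslope_of_ne _ hlt.ne, slope_def_field, hw1, sub_zero]
    simp only [Pi.neg_apply, Pi.mul_apply, id_eq, hdw]
    rw [show 1 - α = 1 + -α by ring, Real.rpow_add hpos, Real.rpow_one]
    field_simp
    ring

/-- For `0 < α < 1` and `v` continuously differentiable on `[0,T]`, the left
Riemann–Liouville derivatives of `v` and of `v²` of order `α` exist at every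
`t ∈ (0,T)` and satisfy `(D_{0+}^α (v²))(t) ≤ 2 v(t) (D_{0+}^α v)(t)`. -/
theorem rl_deriv_sq_le (α T : ℝ) (hα0 : 0 < α) (hα1 : α < 1) (hT : 0 < T)
    (v : ℝ → ℝ) (hv : ContDiffOn ℝ 1 v (Set.Icc 0 T)) :
    ∀ t ∈ Set.Ioo (0 : ℝ) T, ∃ Dv D2 : ℝ,
      HasDerivAt (fun τ => ∫ s in (0:ℝ)..τ, rlKernel (1 - α) (τ - s) * v s) Dv t ∧
      HasDerivAt (fun τ => ∫ s in (0:ℝ)..τ, rlKernel (1 - α) (τ - s) * (v s) ^ 2) D2 t ∧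
      D2 ≤ 2 * v t * Dv := by
  intro t ht
  have hIcc : t ∈ Icc 0 T := Ioo_subset_Icc_self ht
  obtain ⟨v', hv', hd⟩ : ∃ v' : ℝ → ℝ, ContinuousOn v' (Icc 0 T) ∧
      ∀ s ∈ Ioo 0 T, HasDerivAt v (v' s) s :=
    ⟨derivWithin v (Icc 0 T), hv.continuousOn_derivWithin (uniqueDiffOn_Icc hT) le_rfl,
      fun s hs => ((hv.differentiableOn one_ne_zero) s
        (Ioo_subset_Icc_self hs)).hasDerivWithinAt.hasDerivAt (Icc_mem_nhds hs.1 hs.2)⟩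
  have hvc := hv.continuousOn
  have hd2 : ∀ s ∈ Ioo 0 T, HasDerivAt (fun s => v s ^ 2) (2 * v s * v' s) s := fun s hs =>
    ((hd s hs).pow 2).congr_deriv (by norm_num)
  refine ⟨_, _, hasDerivAt_integral_rlKernel_mul hα1 hvc hv' hd ht,
    hasDerivAt_integral_rlKernel_mul (f := fun s => v s ^ 2) (f' := fun s => 2 * v s * v' s) hα1
      (hvc.pow 2) ((hvc.const_mul 2).mul hv') hd2 ht, ?_⟩
  have hmaps : MapsTo (fun x => t * x) (Icc 0 1) (Icc 0 T) := mapsTo_mul_left_Icc hIcc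
  have hcoef : 0 ≤ t ^ (-α) / Real.Gamma (1 - α) :=
    div_nonneg (Real.rpow_nonneg ht.1.le _) (Real.Gamma_pos_of_pos (by linarith)).le
  rw [mul_left_comm]
  refine mul_le_mul_of_nonneg_left ?_ hcoef
  have hint := intervalIntegrable_one_sub_rpow_mul (g := fun x =>
    (1 - α) * v (t * x) + t * x * v' (t * x)) hα1 (by fun_prop (disch := exact hmaps))
  have hint2 := intervalIntegrable_one_sub_rpow_mul (g := fun x =>
    (1 - α) * v (t * x) ^ 2 + t * x * (2 * v (t * x) * v' (t * x))) hα1 (by fun_prop (disch := exact hmaps))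
  have hφint := hint2.sub (hint.const_mul (2 * v t))
  rw [← sub_nonpos, ← intervalIntegral.integral_const_mul,
    ← intervalIntegral.integral_sub hint2 (hint.const_mul _)]
  have hderiv : ∀ x ∈ Ioc (0:ℝ) 1,
      HasDerivAt (fun x => v (t * x) - v t) (t * v' (t * x)) x := by
    intro x hx
    have h1 : HasDerivAt (fun x : ℝ => t * x) t x := by
      simpa using (hasDerivAt_id x).const_mul t
    have hmem : t * x ∈ Ioo 0 T :=
      ⟨mul_pos ht.1 hx.1, (mul_le_of_le_one_right ht.1.le hx.2).trans_lt ht.2⟩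
    exact (((hd _ hmem).comp x h1).sub_const (v t)).congr_deriv (by ring)
  have key := intervalIntegral.integral_le_sub_of_hasDeriv_right_of_le zero_le_one
    (g := fun x : ℝ => x * (1 - x) ^ (-α) * (v (t * x) - v t) ^ 2)
    (g' := fun x : ℝ => (1 - x) ^ (-α) * ((v (t * x) - v t) ^ 2 +
      2 * t * x * (v (t * x) - v t) * v' (t * x)) +
      α * x * (1 - x) ^ (-α - 1) * (v (t * x) - v t) ^ 2)
    (continuousOn_mul_one_sub_rpow_mul_sq hα1 (by fun_prop (disch := exact hmaps)) (by simp)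
      (hderiv 1 (by simp)).differentiableAt) ?_
    ((intervalIntegrable_iff_integrableOn_Icc_of_le zero_le_one).1 hφint) ?_
  · simpa using key
  · intro x hx
    have hp : HasDerivAt (fun x : ℝ => (1 - x) ^ (-α)) (α * (1 - x) ^ (-α - 1)) x := by
      have h := ((hasDerivAt_id x).const_sub 1).rpow_const (p := -α)
        (Or.inl (by simpa using (sub_pos.2 hx.2).ne'))
      exact h.congr_deriv (by simp)
    have h := ((hasDerivAt_id x).mul hp).mul ((hderiv x (Ioo_subset_Ioc_self hx)).pow 2)
    refine HasDerivAt.hasDerivWithinAt (h.congr_deriv ?_)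
    simp only [id_eq, Pi.mul_apply, Pi.pow_apply]
    push_cast
    ring
  · intro x hx
    have hpos : 0 < 1 - x := sub_pos.2 hx.2
    have hsplit : (1 - x) ^ (-α) = (1 - x) ^ (-α - 1) * (1 - x) := by
      rw [← Real.rpow_add_one hpos.ne']
      ring_nf
    have hk : 0 ≤ (1 - x) ^ (-α - 1) := Real.rpow_nonneg hpos.le _
    have h1 : 0 ≤ α * ((1 - x) ^ (-α - 1) * (v (t * x) - v t) ^ 2) := by positivity
    have h2 : 0 ≤ (1 - α) * ((1 - x) ^ (-α - 1) * (1 - x) * v t ^ 2) :=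
      mul_nonneg (by linarith) (by positivity)
    rw [hsplit]
    linear_combination h1 + h2
end

section
/- Let 0 < α < 1 and α₁, α₂ > 0 with α₁ + α₂ = α, let T > 0, and let v, w : [0,T] → ℝ be continuously differentiable. Then ∫_0^T v(t) · (D_{0+}^α w)(t) dt = ∫_0^T (D_{0+}^{α₁} w)(t) · (D_{T−}^{α₂} v)(t) dt, where all Riemann–Liouville derivatives exist on (0,T) and both integrals converge absolutely. -/
open MeasureTheory Set Filter Topology
open scoped Convolution

/-- The Riemann–Liouville kernel, extended by zero to the nonpositive half-line. -/
noncomputable def causalKernel (b : ℝ) : ℝ → ℝ := (Ioi 0).indicator (rlKernel b)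

lemma causalKernel_of_pos (b : ℝ) {x : ℝ} (hx : 0 < x) : causalKernel b x = rlKernel b x :=
  indicator_of_mem (mem_Ioi.2 hx) _

lemma causalKernel_of_nonpos (b : ℝ) {x : ℝ} (hx : x ≤ 0) : causalKernel b x = 0 :=
  indicator_of_notMem (by simpa using hx) _

lemma measurable_causalKernel (b : ℝ) : Measurable (causalKernel b) := by
  unfold causalKernel rlKernel
  exact Measurable.indicator (by fun_prop) measurableSet_Ioi

lemma causalKernel_nonneg {b : ℝ} (hb : 0 < b) (x : ℝ) : 0 ≤ causalKernel b x := by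
  refine indicator_nonneg (fun y hy => ?_) x
  exact div_nonneg (Real.rpow_nonneg (le_of_lt hy) _) (Real.Gamma_pos_of_pos hb).le

lemma continuousOn_causalKernel (b : ℝ) : ContinuousOn (causalKernel b) (Ioi 0) := by
  have h : ContinuousOn (rlKernel b) (Ioi 0) := fun x hx =>
    ((Real.continuousAt_rpow_const x _ (Or.inl (ne_of_gt hx))).div_const _).continuousWithinAt
  exact h.congr fun x hx => causalKernel_of_pos b hx

lemma causalKernel_one_of_pos {x : ℝ} (hx : 0 < x) : causalKernel 1 x = 1 := by
  simp [causalKernel_of_pos 1 hx, rlKernel]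

/-- The convolution of functions vanishing on the nonpositive half-line is an integral over a
bounded interval. -/
lemma convolution_eq_intervalIntegral {f g : ℝ → ℝ} (hf : ∀ x ≤ 0, f x = 0)
    (hg : ∀ x ≤ 0, g x = 0) {x : ℝ} (hx : 0 ≤ x) :
    (f ⋆[ContinuousLinearMap.mul ℝ ℝ] g) x = ∫ s in (0 : ℝ)..x, f s * g (x - s) := by
  rw [convolution_mul, intervalIntegral.integral_of_le hx]
  refine (setIntegral_eq_integral_of_forall_compl_eq_zero fun s hs => ?_).symm
  rcases le_or_gt s 0 with h | h
  · simp [hf s h]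
  · have : x < s := by
      by_contra! h'
      exact hs ⟨h, h'⟩
    simp [hg (x - s) (by linarith)]

/-- The convolution of functions vanishing on the nonpositive half-line does so too. -/
lemma convolution_eq_zero_of_nonpos {f g : ℝ → ℝ} (hf : ∀ x ≤ 0, f x = 0)
    (hg : ∀ x ≤ 0, g x = 0) {x : ℝ} (hx : x ≤ 0) :
    (f ⋆[ContinuousLinearMap.mul ℝ ℝ] g) x = 0 := by
  rw [convolution_mul]
  refine integral_eq_zero_of_ae (Eventually.of_forall fun s => ?_)
  rcases le_or_gt s 0 with h | h
  · simp [hf s h]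
  · simp [hg (x - s) (by linarith)]

lemma convolution_mul_comm (f g : ℝ → ℝ) :
    f ⋆[ContinuousLinearMap.mul ℝ ℝ] g = g ⋆[ContinuousLinearMap.mul ℝ ℝ] f := by
  ext x
  rw [convolution_mul, convolution_mul_swap]
  simp_rw [mul_comm]

lemma integral_rpow_mul_sub_rpow {a b x : ℝ} (ha : 0 < a) (hb : 0 < b) (hx : 0 < x) :
    ∫ s in (0 : ℝ)..x, s ^ (a - 1) * (x - s) ^ (b - 1) =
      x ^ (a + b - 1) * (Real.Gamma a * Real.Gamma b / Real.Gamma (a + b)) := by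
  have key := Complex.betaIntegral_scaled a b hx
  rw [Complex.betaIntegral_eq_Gamma_mul_div _ _ (by simpa) (by simpa), ← Complex.ofReal_add,
    Complex.Gamma_ofReal, Complex.Gamma_ofReal, Complex.Gamma_ofReal] at key
  rw [← Complex.ofReal_inj, ← intervalIntegral.integral_ofReal]
  rw [intervalIntegral.integral_congr (g := fun s : ℝ =>
    (s : ℂ) ^ ((a : ℂ) - 1) * ((x : ℂ) - s) ^ ((b : ℂ) - 1)), key]
  · push_cast [Complex.ofReal_cpow hx.le]
    rfl
  · intro s hs
    rw [uIcc_of_le hx.le] at hs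
    push_cast [Complex.ofReal_cpow hs.1, Complex.ofReal_cpow (sub_nonneg.2 hs.2)]
    rfl

lemma causalKernel_convolution {a b : ℝ} (ha : 0 < a) (hb : 0 < b) :
    causalKernel a ⋆[ContinuousLinearMap.mul ℝ ℝ] causalKernel b = causalKernel (a + b) := by
  ext x
  rcases le_or_gt x 0 with hx | hx
  · rw [convolution_eq_zero_of_nonpos (fun _ => causalKernel_of_nonpos a)
      (fun _ => causalKernel_of_nonpos b) hx, causalKernel_of_nonpos _ hx]
  rw [convolution_eq_intervalIntegral (fun _ => causalKernel_of_nonpos a)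
    (fun _ => causalKernel_of_nonpos b) hx.le, causalKernel_of_pos _ hx, rlKernel]
  have : ∫ s in (0 : ℝ)..x, causalKernel a s * causalKernel b (x - s) =
      ∫ s in (0 : ℝ)..x, (s ^ (a - 1) * (x - s) ^ (b - 1)) / (Real.Gamma a * Real.Gamma b) := by
    rw [intervalIntegral.integral_of_le hx.le, intervalIntegral.integral_of_le hx.le,
      integral_Ioc_eq_integral_Ioo, integral_Ioc_eq_integral_Ioo]
    refine setIntegral_congr_fun measurableSet_Ioo fun s hs => ?_
    rw [causalKernel_of_pos a hs.1, causalKernel_of_pos b (sub_pos.2 hs.2), rlKernel, rlKernel,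
      div_mul_div_comm]
  rw [this, intervalIntegral.integral_div, integral_rpow_mul_sub_rpow ha hb hx]
  have := Real.Gamma_pos_of_pos ha
  have := Real.Gamma_pos_of_pos hb
  field_simp

lemma convolutionExistsAt_causalKernel {a b : ℝ} (ha : 0 < a) (hb : 0 < b) (x : ℝ) :
    ConvolutionExistsAt (causalKernel a) (causalKernel b) x (ContinuousLinearMap.mul ℝ ℝ) := by
  rcases le_or_gt x 0 with hx | hx
  · refine (integrable_zero ℝ ℝ volume).congr (Eventually.of_forall fun s => ?_)
    rcases le_or_gt s 0 with h | h
    · simp [causalKernel_of_nonpos a h]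
    · simp [causalKernel_of_nonpos b (show x - s ≤ 0 by linarith)]
  · by_contra h
    have h0 : (causalKernel a ⋆[ContinuousLinearMap.mul ℝ ℝ] causalKernel b) x = 0 :=
      integral_undef h
    rw [causalKernel_convolution ha hb, causalKernel_of_pos _ hx, rlKernel] at h0
    exact (div_pos (Real.rpow_pos_of_pos hx _) (Real.Gamma_pos_of_pos (add_pos ha hb))).ne' h0

/-- A measurable function which is locally bounded by a multiple of `causalKernel b`. -/
structure KernelDominated (b : ℝ) (f : ℝ → ℝ) : Prop where
  measurable : Measurable f
  bound : ∀ R, ∃ C, ∀ x ≤ R, |f x| ≤ C * causalKernel b x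

namespace KernelDominated

variable {a b c : ℝ} {f g h : ℝ → ℝ}

lemma eq_zero (hf : KernelDominated b f) : ∀ x ≤ 0, f x = 0 := fun x hx => by
  obtain ⟨C, hC⟩ := hf.bound 0
  simpa [causalKernel_of_nonpos b hx] using hC x hx

lemma norm (hf : KernelDominated b f) : KernelDominated b fun x => ‖f x‖ :=
  ⟨hf.measurable.norm, fun R => by simpa using hf.bound R⟩

lemma add (hf : KernelDominated b f) (hg : KernelDominated b g) :
    KernelDominated b fun x => f x + g x := by
  refine ⟨hf.measurable.add hg.measurable, fun R => ?_⟩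
  obtain ⟨C, hC⟩ := hf.bound R
  obtain ⟨D, hD⟩ := hg.bound R
  refine ⟨C + D, fun x hx => (abs_add_le _ _).trans ?_⟩
  rw [add_mul]
  exact add_le_add (hC x hx) (hD x hx)

lemma const_mul (hf : KernelDominated b f) (r : ℝ) : KernelDominated b fun x => r * f x := by
  refine ⟨hf.measurable.const_mul r, fun R => ?_⟩
  obtain ⟨C, hC⟩ := hf.bound R
  refine ⟨|r| * C, fun x hx => ?_⟩
  rw [abs_mul, mul_assoc]
  exact mul_le_mul_of_nonneg_left (hC x hx) (abs_nonneg r)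

lemma mono (ha : 0 < a) (hab : a ≤ b) (hf : KernelDominated b f) : KernelDominated a f := by
  refine ⟨hf.measurable, fun R => ?_⟩
  obtain ⟨C, hC⟩ := hf.bound R
  have hΓa := Real.Gamma_pos_of_pos ha
  have hΓb := Real.Gamma_pos_of_pos (ha.trans_le hab)
  refine ⟨|C| * (R ^ (b - a) * Real.Gamma a / Real.Gamma b), fun x hx => ?_⟩
  rcases le_or_gt x 0 with h0 | h0
  · simp [hf.eq_zero x h0, causalKernel_of_nonpos a h0]
  refine (hC x hx).trans ?_
  rw [mul_assoc]
  refine mul_le_mul (le_abs_self C) ?_ (causalKernel_nonneg (ha.trans_le hab) x) (abs_nonneg C)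
  rw [causalKernel_of_pos a h0, causalKernel_of_pos b h0, rlKernel, rlKernel]
  have e : x ^ (b - 1) = x ^ (b - a) * x ^ (a - 1) := by
    rw [← Real.rpow_add h0]; ring_nf
  have l : x ^ (b - a) ≤ R ^ (b - a) := Real.rpow_le_rpow h0.le hx (by linarith)
  have p : 0 ≤ x ^ (a - 1) := Real.rpow_nonneg h0.le _
  calc x ^ (b - 1) / Real.Gamma b ≤ R ^ (b - a) * x ^ (a - 1) / Real.Gamma b := by
        rw [e]; gcongr
    _ = _ := by field_simp

lemma of_bounded {M : ℝ} (hm : Measurable f) (h0 : ∀ x ≤ 0, f x = 0) (hM : ∀ x, |f x| ≤ M) :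
    KernelDominated 1 f := by
  refine ⟨hm, fun _ => ⟨M, fun x _ => ?_⟩⟩
  rcases le_or_gt x 0 with h | h
  · simp [h0 x h, causalKernel_of_nonpos 1 h]
  · simpa [causalKernel_one_of_pos h] using hM x

lemma convolution_integrand_bound (hf : KernelDominated a f) (hg : KernelDominated b g) (R : ℝ) :
    ∃ C, ∀ x ≤ R, ∀ t, ‖f t * g (x - t)‖ ≤
      C * (causalKernel a t * causalKernel b (x - t)) := by
  obtain ⟨C, hC⟩ := hf.bound R
  obtain ⟨D, hD⟩ := hg.bound R
  refine ⟨C * D, fun x hx t => ?_⟩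
  rcases le_or_gt t 0 with h | h
  · simp [hf.eq_zero t h, causalKernel_of_nonpos a h]
  rcases le_or_gt (x - t) 0 with h' | h'
  · simp [hg.eq_zero _ h', causalKernel_of_nonpos b h']
  have h₁ := hC t (by linarith)
  have h₂ := hD (x - t) (by linarith)
  rw [norm_mul, Real.norm_eq_abs, Real.norm_eq_abs, mul_mul_mul_comm]
  exact mul_le_mul h₁ h₂ (abs_nonneg _) ((abs_nonneg _).trans h₁)

lemma convolutionExistsAt (ha : 0 < a) (hb : 0 < b) (hf : KernelDominated a f)
    (hg : KernelDominated b g) (x : ℝ) :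
    ConvolutionExistsAt f g x (ContinuousLinearMap.mul ℝ ℝ) := by
  obtain ⟨C, hC⟩ := hf.convolution_integrand_bound hg x
  exact ((convolutionExistsAt_causalKernel ha hb x).integrable.const_mul C).mono'
    (hf.measurable.mul (hg.measurable.comp (measurable_const.sub measurable_id))).aestronglyMeasurable
    (Eventually.of_forall (hC x le_rfl))

lemma convolution (ha : 0 < a) (hb : 0 < b) (hf : KernelDominated a f)
    (hg : KernelDominated b g) :
    KernelDominated (a + b) (f ⋆[ContinuousLinearMap.mul ℝ ℝ] g) := by
  refine ⟨?_, fun R => ?_⟩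
  · have hm : StronglyMeasurable (Function.uncurry fun x t : ℝ => f t * g (x - t)) :=
      ((hf.measurable.comp measurable_snd).mul
        (hg.measurable.comp (measurable_fst.sub measurable_snd))).stronglyMeasurable
    exact hm.integral_prod_right.measurable
  · obtain ⟨C, hC⟩ := hf.convolution_integrand_bound hg R
    refine ⟨C, fun x hx => ?_⟩
    rw [← causalKernel_convolution ha hb, convolution_mul, convolution_mul,
      ← integral_const_mul]
    exact norm_integral_le_of_norm_le
      ((convolutionExistsAt_causalKernel ha hb x).integrable.const_mul C)
      (Eventually.of_forall (hC x hx))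

lemma convolution_assoc (ha : 0 < a) (hb : 0 < b) (hc : 0 < c) (hf : KernelDominated a f)
    (hg : KernelDominated b g) (hh : KernelDominated c h) :
    (f ⋆[ContinuousLinearMap.mul ℝ ℝ] g) ⋆[ContinuousLinearMap.mul ℝ ℝ] h =
      f ⋆[ContinuousLinearMap.mul ℝ ℝ] (g ⋆[ContinuousLinearMap.mul ℝ ℝ] h) := by
  ext x
  refine MeasureTheory.convolution_assoc _ _ _ _ (fun x y z => mul_assoc x y z)
    hf.measurable.aestronglyMeasurable hg.measurable.aestronglyMeasurable
    hh.measurable.aestronglyMeasurable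
    (Eventually.of_forall fun y => hf.convolutionExistsAt ha hb hg y)
    (Eventually.of_forall fun y => hg.norm.convolutionExistsAt hb hc hh.norm y)
    (hf.norm.convolutionExistsAt ha (add_pos hb hc) (hg.norm.convolution hb hc hh.norm) x)

end KernelDominated

lemma kernelDominated_causalKernel {b : ℝ} (hb : 0 < b) : KernelDominated b (causalKernel b) :=
  ⟨measurable_causalKernel b, fun _ => ⟨1, fun x _ => by
    rw [abs_of_nonneg (causalKernel_nonneg hb x), one_mul]⟩⟩

lemma KernelDominated.continuousOn_causalKernel_convolution {b : ℝ} {g : ℝ → ℝ} (hb : 0 < b)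
    (hg : KernelDominated 1 g) (hgc : ContinuousOn g (Ioi 0)) :
    ContinuousOn (causalKernel b ⋆[ContinuousLinearMap.mul ℝ ℝ] g) (Ioi 0) := by
  intro t ht
  refine ContinuousAt.continuousWithinAt ?_
  obtain ⟨C, hC⟩ := hg.bound (t + 1)
  change ContinuousAt (fun x => ∫ u, causalKernel b u * g (x - u)) t
  refine continuousAt_of_dominated
    (bound := fun u => C * (causalKernel b u * causalKernel 1 (t + 1 - u)))
    (Eventually.of_forall fun x => ((measurable_causalKernel b).mul
      (hg.measurable.comp (measurable_const.sub measurable_id))).aestronglyMeasurable)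
    ?_ ((convolutionExistsAt_causalKernel hb one_pos (t + 1)).integrable.const_mul C) ?_
  · filter_upwards [Iio_mem_nhds (lt_add_one t)] with x hx
    refine Eventually.of_forall fun u => ?_
    rcases le_or_gt u 0 with h | h
    · simp [causalKernel_of_nonpos b h]
    have hx' : x < t + 1 := hx
    rcases le_or_gt (x - u) 0 with h' | h'
    · rw [hg.eq_zero _ h', mul_zero, norm_zero]
      have hC0 : 0 ≤ C := by
        have := (abs_nonneg _).trans (hC t (by linarith))
        rwa [causalKernel_one_of_pos ht, mul_one] at this
      exact mul_nonneg hC0 (mul_nonneg (causalKernel_nonneg hb _) (causalKernel_nonneg one_pos _))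
    · have := hC (x - u) (by linarith)
      rw [causalKernel_one_of_pos h', mul_one] at this
      rw [causalKernel_one_of_pos (by linarith), mul_one, norm_mul, Real.norm_eq_abs,
        Real.norm_eq_abs, abs_of_nonneg (causalKernel_nonneg hb u), mul_comm]
      exact mul_le_mul_of_nonneg_right this (causalKernel_nonneg hb u)
  · filter_upwards [compl_mem_ae_iff.2 (measure_singleton (μ := volume) t)] with u hu
    have hgu : ContinuousAt g (t - u) := by
      rcases lt_or_gt_of_ne (show t ≠ u from fun h => hu h.symm) with h | h
      · refine continuousAt_const.congr (f := fun _ => (0 : ℝ)) ?_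
        filter_upwards [Iio_mem_nhds (sub_neg.2 h)] with y hy using (hg.eq_zero y (le_of_lt hy)).symm
      · exact hgc.continuousAt (Ioi_mem_nhds (sub_pos.2 h))
    have hsub : ContinuousAt (fun x : ℝ => x - u) t := by fun_prop
    exact continuousAt_const.mul (ContinuousAt.comp (f := fun x : ℝ => x - u) hgu hsub)

/-- The Riemann–Liouville integral of order `b` of the measure `c • δ₀ + g`. -/
noncomputable def rlPotential (c : ℝ) (g : ℝ → ℝ) (b x : ℝ) : ℝ :=
  c * causalKernel b x + (causalKernel b ⋆[ContinuousLinearMap.mul ℝ ℝ] g) x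

section rlPotential

variable {a b : ℝ} {g : ℝ → ℝ}

lemma kernelDominated_rlPotential (c : ℝ) (hb : 0 < b) (hg : KernelDominated 1 g) :
    KernelDominated b (rlPotential c g b) :=
  ((kernelDominated_causalKernel hb).const_mul c).add
    (((kernelDominated_causalKernel hb).convolution hb one_pos hg).mono hb (by linarith))

lemma causalKernel_convolution_rlPotential (c : ℝ) (ha : 0 < a) (hb : 0 < b)
    (hg : KernelDominated 1 g) :
    causalKernel a ⋆[ContinuousLinearMap.mul ℝ ℝ] rlPotential c g b = rlPotential c g (a + b) := by
  have hka := kernelDominated_causalKernel ha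
  have hkb := kernelDominated_causalKernel hb
  have hkg := hkb.convolution hb one_pos hg
  have e : rlPotential c g b =
      c • causalKernel b + (causalKernel b ⋆[ContinuousLinearMap.mul ℝ ℝ] g) := rfl
  rw [e, ConvolutionExists.distrib_add (g := c • causalKernel b)
    (fun x => hka.convolutionExistsAt ha hb (hkb.const_mul c) x)
    (fun x => hka.convolutionExistsAt ha (by linarith) hkg x), convolution_smul,
    ← hka.convolution_assoc ha hb one_pos hkb hg, causalKernel_convolution ha hb]
  rfl

lemma continuousOn_rlPotential (c : ℝ) (hb : 0 < b) (hg : KernelDominated 1 g)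
    (hgc : ContinuousOn g (Ioi 0)) : ContinuousOn (rlPotential c g b) (Ioi 0) :=
  (continuousOn_const.mul (continuousOn_causalKernel b)).add
    (hg.continuousOn_causalKernel_convolution hb hgc)

lemma KernelDominated.causalKernel_one_convolution {f : ℝ → ℝ} (hf : KernelDominated b f)
    {x : ℝ} (hx : 0 ≤ x) :
    (causalKernel 1 ⋆[ContinuousLinearMap.mul ℝ ℝ] f) x = ∫ s in (0 : ℝ)..x, f s := by
  rw [convolution_mul_comm, convolution_eq_intervalIntegral hf.eq_zero
    (fun _ => causalKernel_of_nonpos 1) hx, intervalIntegral.integral_of_le hx,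
    intervalIntegral.integral_of_le hx, integral_Ioc_eq_integral_Ioo, integral_Ioc_eq_integral_Ioo]
  refine setIntegral_congr_fun measurableSet_Ioo fun s hs => ?_
  rw [causalKernel_one_of_pos (sub_pos.2 hs.2), mul_one]

lemma KernelDominated.intervalIntegrable {f : ℝ → ℝ} (hb : 0 < b) (hf : KernelDominated b f)
    {x : ℝ} (hx : 0 ≤ x) : IntervalIntegrable f volume 0 x := by
  have h := (hf.convolutionExistsAt hb one_pos (kernelDominated_causalKernel one_pos) x).integrable
  rw [intervalIntegrable_iff_integrableOn_Ioo_of_le hx]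
  refine h.integrableOn.congr_fun (fun s hs => ?_) measurableSet_Ioo
  simp [causalKernel_one_of_pos (sub_pos.2 hs.2)]

lemma hasDerivAt_rlPotential_add_one (c : ℝ) (hb : 0 < b) (hg : KernelDominated 1 g)
    (hgc : ContinuousOn g (Ioi 0)) {t : ℝ} (ht : 0 < t) :
    HasDerivAt (rlPotential c g (1 + b)) (rlPotential c g b t) t := by
  have hd := kernelDominated_rlPotential c hb hg
  have h := intervalIntegral.integral_hasDerivAt_right (hd.intervalIntegrable hb ht.le)
    hd.measurable.stronglyMeasurable.stronglyMeasurableAtFilter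
    ((continuousOn_rlPotential c hb hg hgc).continuousAt (Ioi_mem_nhds ht))
  refine h.congr_of_eventuallyEq ?_
  filter_upwards [Ioi_mem_nhds ht] with x hx
  rw [← causalKernel_convolution_rlPotential c one_pos hb hg,
    hd.causalKernel_one_convolution (le_of_lt hx)]

end rlPotential

/-- A continuously differentiable function on `[0, T]` is the first order potential of its initial
value and its derivative. -/
lemma exists_eq_rlPotential_one {T : ℝ} {w : ℝ → ℝ} (hT : 0 < T)
    (hw : ContDiffOn ℝ 1 w (Icc 0 T)) :
    ∃ g, KernelDominated 1 g ∧ ContinuousOn g (Ioi 0) ∧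
      ∀ x ∈ Ioc 0 T, w x = rlPotential (w 0) g 1 x := by
  have hd : ContinuousOn (derivWithin w (Icc 0 T)) (Icc 0 T) :=
    hw.continuousOn_derivWithin (uniqueDiffOn_Icc hT) le_rfl
  set e : ℝ → ℝ := IccExtend hT.le ((Icc 0 T).domRestrict (derivWithin w (Icc 0 T))) with he
  have hec : Continuous e := hd.domRestrict.Icc_extend'
  obtain ⟨M, hM⟩ := (isCompact_Icc (a := (0 : ℝ)) (b := T)).exists_bound_of_continuousOn hd
  have heM : ∀ x, |e x| ≤ M := fun x => hM _ (projIcc 0 T hT.le x).2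
  have hg : KernelDominated 1 ((Ioi 0).indicator e) := by
    refine KernelDominated.of_bounded (hec.measurable.indicator measurableSet_Ioi)
      (fun x hx => indicator_of_notMem (by simpa using hx) _) (M := M) fun x => ?_
    exact (norm_indicator_le_norm_self e x).trans (heM x)
  refine ⟨(Ioi 0).indicator e, hg, hec.continuousOn.congr fun x hx => indicator_of_mem hx _,
    fun x hx => ?_⟩
  rw [rlPotential, hg.causalKernel_one_convolution hx.1.le, causalKernel_one_of_pos hx.1]
  have hi : ∫ s in (0 : ℝ)..x, (Ioi 0).indicator e s = ∫ s in (0 : ℝ)..x, e s := by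
    rw [intervalIntegral.integral_of_le hx.1.le, intervalIntegral.integral_of_le hx.1.le]
    exact setIntegral_congr_fun measurableSet_Ioc fun s hs => indicator_of_mem hs.1 _
  rw [hi, intervalIntegral.integral_eq_sub_of_hasDerivAt_of_le hx.1.le
    (hw.continuousOn.mono (Icc_subset_Icc_right hx.2)) (fun s hs => ?_)
    (hec.intervalIntegrable _ _)]
  · ring
  · have hs' : s ∈ Icc 0 T := ⟨hs.1.le, hs.2.le.trans hx.2⟩
    rw [he, IccExtend_of_mem _ _ hs']
    exact ((hw.differentiableOn one_ne_zero) s hs').hasDerivWithinAt.hasDerivAt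
      (Icc_mem_nhds hs.1 (hs.2.trans_le hx.2))

/-- The left Riemann–Liouville derivative of a potential of order one. -/
lemma hasDerivAt_rlIntegral {T b c : ℝ} {w g : ℝ → ℝ} (hb : 0 < b)
    (hg : KernelDominated 1 g) (hgc : ContinuousOn g (Ioi 0))
    (hwg : ∀ x ∈ Ioc 0 T, w x = rlPotential c g 1 x) {t : ℝ} (ht : t ∈ Ioo 0 T) :
    HasDerivAt (fun τ => ∫ s in (0 : ℝ)..τ, rlKernel b (τ - s) * w s) (rlPotential c g b t) t := by
  refine (hasDerivAt_rlPotential_add_one c hb hg hgc ht.1).congr_of_eventuallyEq ?_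
  filter_upwards [Ioo_mem_nhds ht.1 ht.2] with x hx
  rw [add_comm, ← causalKernel_convolution_rlPotential c hb one_pos hg, convolution_mul_comm,
    convolution_eq_intervalIntegral (kernelDominated_rlPotential c one_pos hg).eq_zero
    (fun _ => causalKernel_of_nonpos b) hx.1.le, intervalIntegral.integral_of_le hx.1.le,
    intervalIntegral.integral_of_le hx.1.le, integral_Ioc_eq_integral_Ioo,
    integral_Ioc_eq_integral_Ioo]
  refine setIntegral_congr_fun measurableSet_Ioo fun s hs => ?_
  rw [causalKernel_of_pos b (sub_pos.2 hs.2), hwg s ⟨hs.1, (hs.2.trans hx.2).le⟩, mul_comm]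

/-- Fractional integration by parts (splitting of orders):
`∫_0^T v (D_{0+}^α w) = ∫_0^T (D_{0+}^{α₁} w)(D_{T-}^{α₂} v)` for `α₁ + α₂ = α < 1`. -/
theorem rl_integration_by_parts_split (α α₁ α₂ T : ℝ)
    (hα0 : 0 < α) (hα1 : α < 1) (h₁ : 0 < α₁) (h₂ : 0 < α₂) (hsum : α₁ + α₂ = α)
    (hT : 0 < T)
    (v w : ℝ → ℝ)
    (hv : ContDiffOn ℝ 1 v (Set.Icc 0 T)) (hw : ContDiffOn ℝ 1 w (Set.Icc 0 T)) :
    ∃ DLα DLα₁ DRα₂ : ℝ → ℝ,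
      (∀ t ∈ Set.Ioo (0 : ℝ) T,
        HasDerivAt (fun τ => ∫ s in (0:ℝ)..τ, rlKernel (1 - α) (τ - s) * w s) (DLα t) t) ∧
      (∀ t ∈ Set.Ioo (0 : ℝ) T,
        HasDerivAt (fun τ => ∫ s in (0:ℝ)..τ, rlKernel (1 - α₁) (τ - s) * w s) (DLα₁ t) t) ∧
      (∀ t ∈ Set.Ioo (0 : ℝ) T,
        HasDerivAt (fun τ => ∫ s in τ..T, rlKernel (1 - α₂) (s - τ) * v s) (-(DRα₂ t)) t) ∧
      IntervalIntegrable (fun t => v t * DLα t) MeasureTheory.volume 0 T ∧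
      IntervalIntegrable (fun t => DLα₁ t * DRα₂ t) MeasureTheory.volume 0 T ∧
      (∫ t in (0:ℝ)..T, v t * DLα t) = ∫ t in (0:ℝ)..T, DLα₁ t * DRα₂ t := by
  obtain ⟨g, hg, hgc, hwg⟩ := exists_eq_rlPotential_one hT hw
  have hr : ContDiffOn ℝ 1 (fun x => v (T - x)) (Icc 0 T) :=
    hv.comp (contDiff_const.sub contDiff_id).contDiffOn fun x hx =>
      ⟨by linarith [hx.2], by linarith [hx.1]⟩
  obtain ⟨h, hh, hhc, hvh⟩ := exists_eq_rlPotential_one hT hr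
  have hb : 0 < 1 - α := by linarith
  have hb₁ : 0 < 1 - α₁ := by linarith
  have hb₂ : 0 < 1 - α₂ := by linarith
  set c := w 0
  set d := v (T - 0)
  have hφ := kernelDominated_rlPotential c hb hg
  have hφ₁ := kernelDominated_rlPotential c hb₁ hg
  have hψ := kernelDominated_rlPotential d one_pos hh
  have hψ₂ := kernelDominated_rlPotential d hb₂ hh
  have hvψ : EqOn (fun t => rlPotential c g (1 - α) t * rlPotential d h 1 (T - t))
      (fun t => v t * rlPotential c g (1 - α) t) (Ioo 0 T) := fun t ht => by
    simp only [← hvh (T - t) ⟨by linarith [ht.2], by linarith [ht.1]⟩, sub_sub_cancel, mul_comm]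
  refine ⟨rlPotential c g (1 - α), rlPotential c g (1 - α₁),
    fun t => rlPotential d h (1 - α₂) (T - t), fun t ht => hasDerivAt_rlIntegral hb hg hgc hwg ht,
    fun t ht => hasDerivAt_rlIntegral hb₁ hg hgc hwg ht, fun t ht => ?_, ?_, ?_, ?_⟩
  · have hd := hasDerivAt_rlIntegral hb₂ hh hhc hvh (t := T - t)
      ⟨by linarith [ht.2], by linarith [ht.1]⟩
    convert! hd.comp_const_sub T t using 1
    ext τ
    simpa using (intervalIntegral.integral_comp_sub_left (a := 0) (b := T - τ)
      (fun s => rlKernel (1 - α₂) (s - τ) * v s) T).symm.trans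
      (by simp only [sub_right_comm])
  · rw [intervalIntegrable_iff_integrableOn_Ioo_of_le hT.le]
    exact (hφ.convolutionExistsAt hb one_pos hψ T).integrable.integrableOn.congr_fun hvψ
      measurableSet_Ioo
  · exact (hφ₁.convolutionExistsAt hb₁ hb₂ hψ₂ T).integrable.intervalIntegrable
  · have hk := kernelDominated_causalKernel h₂
    calc ∫ t in (0 : ℝ)..T, v t * rlPotential c g (1 - α) t
        = ∫ t in (0 : ℝ)..T, rlPotential c g (1 - α) t * rlPotential d h 1 (T - t) := by
          rw [intervalIntegral.integral_of_le hT.le, intervalIntegral.integral_of_le hT.le,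
            integral_Ioc_eq_integral_Ioo, integral_Ioc_eq_integral_Ioo]
          exact (setIntegral_congr_fun measurableSet_Ioo hvψ).symm
      _ = (rlPotential c g (1 - α) ⋆[ContinuousLinearMap.mul ℝ ℝ] rlPotential d h 1) T :=
          (convolution_eq_intervalIntegral hφ.eq_zero hψ.eq_zero hT.le).symm
      _ = (rlPotential c g (1 - α₁) ⋆[ContinuousLinearMap.mul ℝ ℝ]
            rlPotential d h (1 - α₂)) T := by
          rw [show (1 : ℝ) - α₁ = α₂ + (1 - α) by linarith,
            ← causalKernel_convolution_rlPotential c h₂ hb hg,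
            convolution_mul_comm (causalKernel α₂),
            hφ.convolution_assoc hb h₂ hb₂ hk hψ₂,
            causalKernel_convolution_rlPotential d h₂ hb₂ hh, add_sub_cancel]
      _ = _ := convolution_eq_intervalIntegral hφ₁.eq_zero hψ₂.eq_zero hT.le
end

section
/- Let 0 < α < 1/2. There exist constants c₁, c₂, c₃ > 0 depending only on α such that for every T > 0 and every infinitely differentiable v : ℝ → ℝ with compact support contained in the open interval (0,T): (i) ∫_0^T ((D_{0+}^α v)(t))² dt ≤ c₁ · |∫_0^T (D_{0+}^α v)(t) · (D_{T−}^α v)(t) dt|; (ii) |∫_0^T (D_{0+}^α v)(t) · (D_{T−}^α v)(t) dt| ≤ c₂ · ∫_0^T ((D_{T−}^α v)(t))² dt; and (iii) ∫_0^T ((D_{T−}^α v)(t))² dt ≤ c₃ · ∫_0^T ((D_{0+}^α v)(t))² dt. -/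
open MeasureTheory Set Filter Topology

/-- The truncated power `u ↦ u₊^(-α)`. -/
noncomputable def truncPow (α u : ℝ) : ℝ := (Ioi (0 : ℝ)).indicator (fun x => x ^ (-α)) u

lemma truncPow_of_pos {α u : ℝ} (hu : 0 < u) : truncPow α u = u ^ (-α) :=
  indicator_of_mem (mem_Ioi.2 hu) _

lemma truncPow_of_nonpos {α u : ℝ} (hu : u ≤ 0) : truncPow α u = 0 :=
  indicator_of_notMem (by simpa using hu) _

lemma truncPow_nonneg (α u : ℝ) : 0 ≤ truncPow α u :=
  indicator_nonneg (fun _ hx => Real.rpow_nonneg (le_of_lt hx) _) u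

@[fun_prop]
lemma measurable_truncPow (α : ℝ) : Measurable (truncPow α) :=
  Measurable.indicator (by fun_prop) measurableSet_Ioi

lemma truncPow_sq (α u : ℝ) : truncPow α u ^ 2 = truncPow (2 * α) u := by
  rcases lt_or_ge 0 u with hu | hu
  · rw [truncPow_of_pos hu, truncPow_of_pos hu, ← Real.rpow_natCast, ← Real.rpow_mul hu.le]
    congr 1
    push_cast
    ring
  · simp [truncPow_of_nonpos hu]

lemma truncPow_mul {a : ℝ} (ha : 0 < a) (α u : ℝ) :
    truncPow α (a * u) = a ^ (-α) * truncPow α u := by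
  rcases lt_or_ge 0 u with hu | hu
  · rw [truncPow_of_pos hu, truncPow_of_pos (mul_pos ha hu), Real.mul_rpow ha.le hu.le]
  · rw [truncPow_of_nonpos hu, truncPow_of_nonpos (mul_nonpos_of_nonneg_of_nonpos ha.le hu),
      mul_zero]

lemma locallyIntegrable_truncPow {α : ℝ} (hα : α < 1) : LocallyIntegrable (truncPow α) := by
  refine LocallyIntegrable.indicator (fun x => ?_) measurableSet_Ioi
  refine ⟨Ioc (x - 1) (x + 1), Ioc_mem_nhds (by linarith) (by linarith), ?_⟩
  exact (intervalIntegral.intervalIntegrable_rpow' (by linarith)).1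

lemma MeasureTheory.LocallyIntegrable.comp_neg_real {f : ℝ → ℝ} (hf : LocallyIntegrable f) :
    LocallyIntegrable (fun u => f (-u)) := by
  have h := locallyIntegrable_map_homeomorph (Homeomorph.neg ℝ) (f := f) (μ := volume)
  have h' : Measure.map (Homeomorph.neg ℝ) (volume : Measure ℝ) = volume :=
    Measure.map_neg_eq_self volume
  rw [h'] at h
  exact h.1 hf

lemma integrable_comp_sub_mul {f g : ℝ → ℝ} (hf : LocallyIntegrable f) (hg : Continuous g)
    (hgc : HasCompactSupport g) (t : ℝ) : Integrable (fun s => f (t - s) * g s) := by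
  have h := (hgc.convolutionExists_right (ContinuousLinearMap.mul ℝ ℝ) hf hg t).integrable
  simpa using h.comp_sub_left t

lemma hasDerivAt_integral_comp_sub_mul {f g : ℝ → ℝ} (hf : LocallyIntegrable f)
    (hg : ContDiff ℝ 1 g) (hgc : HasCompactSupport g) (t : ℝ) :
    HasDerivAt (fun τ => ∫ s, f (τ - s) * g s) (∫ s, f (t - s) * deriv g s) t := by
  have h := hgc.hasDerivAt_convolution_right (ContinuousLinearMap.mul ℝ ℝ) hf hg t
  rw [convolution_mul_swap] at h
  exact h.congr_of_eventuallyEq (Eventually.of_forall fun τ => (convolution_mul_swap).symm)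

/-- A symmetric kernel, homogeneous of degree `-2α` and translation invariant, that vanishes on
the diagonal integrates in its first variable to a multiple of `|s - r|^(1-2α)`. -/
lemma integrable_and_integral_of_homogeneous {α : ℝ} (hα : α < 1 / 2) {K : ℝ → ℝ × ℝ → ℝ}
    (hsymm : ∀ t s r, K t (s, r) = K t (r, s)) (hdiag : ∀ t s, K t (s, s) = 0)
    (hhom : ∀ a b t s r, 0 < a →
      K (a * t + b) (a * s + b, a * r + b) = a ^ (-(2 * α)) * K t (s, r))
    (hK : Integrable (fun t => K t (0, 1))) (p : ℝ × ℝ) :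
    Integrable (fun t => K t p) ∧
      ∫ t, K t p = (∫ t, K t (0, 1)) * |p.1 - p.2| ^ (1 - 2 * α) := by
  obtain ⟨s, r⟩ := p
  wlog hsr : s ≤ r generalizing s r
  · have h := this r s (le_of_not_ge hsr)
    simp only [hsymm _ s r]
    simpa only [abs_sub_comm] using h
  rcases hsr.eq_or_lt with rfl | hlt
  · simp only [hdiag, integral_zero, sub_self, abs_zero]
    rw [Real.zero_rpow (by linarith)]
    exact ⟨integrable_zero _ _ _, by simp⟩
  have ha : 0 < r - s := sub_pos.2 hlt
  have key : (fun t => K t (s, r)) =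
      fun t => (r - s) ^ (-(2 * α)) * K ((r - s)⁻¹ * (t - s)) (0, 1) := by
    funext t
    rw [← hhom (r - s) s _ 0 1 ha]
    congr 1
    · field_simp
      ring
    · simp
  have hint : Integrable (fun t => K ((r - s)⁻¹ * (t - s)) (0, 1)) :=
    (hK.comp_mul_left' (inv_ne_zero ha.ne')).comp_sub_right s
  rw [key]
  refine ⟨hint.const_mul _, ?_⟩
  have h1 : ∫ t, K ((r - s)⁻¹ * (t - s)) (0, 1) = (r - s) * ∫ t, K t (0, 1) := by
    rw [integral_sub_right_eq_self (fun t => K ((r - s)⁻¹ * t) (0, 1)) s,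
      Measure.integral_comp_mul_left (fun t => K t (0, 1)), inv_inv, abs_of_pos ha, smul_eq_mul]
  rw [integral_const_mul, h1]
  simp only
  rw [abs_sub_comm, abs_of_pos ha, sub_eq_add_neg 1, Real.rpow_add ha, Real.rpow_one]
  ring

/-- Fubini for a nonnegative kernel with prescribed `t`-integrals, tested against
`w(s) w(r)`. -/
lemma integrable_and_integral_of_kernel {K : ℝ → ℝ × ℝ → ℝ} {w m : ℝ → ℝ} {c β : ℝ} (hβ : 0 < β)
    (hmeas : Measurable (Function.uncurry K)) (hnn : ∀ t p, 0 ≤ K t p)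
    (hK : ∀ p, Integrable (fun t => K t p) ∧ ∫ t, K t p = c * |p.1 - p.2| ^ β)
    (hw : Continuous w) (hwc : HasCompactSupport w)
    (hm : ∀ t, ∫ p : ℝ × ℝ, K t p * (w p.1 * w p.2) = m t) :
    Integrable m ∧
      ∫ t, m t = c * ∫ p : ℝ × ℝ, |p.1 - p.2| ^ β * (w p.1 * w p.2) := by
  have hWc : HasCompactSupport (fun p : ℝ × ℝ => w p.1 * w p.2) := by
    refine HasCompactSupport.intro (IsCompact.prod hwc hwc) fun p hp => ?_
    rw [mem_prod, not_and_or] at hp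
    rcases hp with h | h <;> simp [image_eq_zero_of_notMem_tsupport h]
  have hpow : Continuous (fun p : ℝ × ℝ => |p.1 - p.2| ^ β) :=
    (by fun_prop : Continuous fun p : ℝ × ℝ => |p.1 - p.2|).rpow_const fun _ => Or.inr hβ.le
  have hI : Integrable (fun p : ℝ × ℝ => |p.1 - p.2| ^ β * (w p.1 * w p.2)) :=
    (by fun_prop : Continuous _).integrable_of_hasCompactSupport hWc.mul_left
  have hF : Integrable (Function.uncurry fun t p => K t p * (w p.1 * w p.2))
      ((volume : Measure ℝ).prod (volume : Measure (ℝ × ℝ))) := by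
    rw [integrable_prod_iff']
    · refine ⟨Eventually.of_forall fun p => (hK p).1.mul_const (w p.1 * w p.2), ?_⟩
      refine (hI.norm.const_mul c).congr (Eventually.of_forall fun p => ?_)
      simp only [Function.uncurry_apply_pair, norm_mul, Real.norm_of_nonneg (hnn _ _)]
      rw [integral_mul_const, (hK p).2, Real.norm_of_nonneg (by positivity)]
      ring
    · refine (hmeas.mul ?_).aestronglyMeasurable
      fun_prop
  refine ⟨hF.integral_prod_left.congr (Eventually.of_forall hm), ?_⟩
  rw [← integral_congr_ae (Eventually.of_forall hm), integral_integral_swap hF,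
    ← integral_const_mul]
  refine integral_congr_ae (Eventually.of_forall fun p => ?_)
  simp only
  rw [integral_mul_const, (hK p).2, mul_assoc]

lemma integral_sq_sub_mul {f w : ℝ → ℝ} (hf : LocallyIntegrable f)
    (hf2 : LocallyIntegrable fun u => f u ^ 2) (hw : Continuous w) (hwc : HasCompactSupport w)
    (hw0 : ∫ s, w s = 0) (t : ℝ) :
    ∫ p : ℝ × ℝ, (f (t - p.1) - f (t - p.2)) ^ 2 * (w p.1 * w p.2) =
      -2 * (∫ s, f (t - s) * w s) ^ 2 := by
  have h1 := integrable_comp_sub_mul hf hw hwc t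
  have h2 := integrable_comp_sub_mul hf2 hw hwc t
  have h0 : Integrable w := hw.integrable_of_hasCompactSupport hwc
  have key : ∀ p : ℝ × ℝ, (f (t - p.1) - f (t - p.2)) ^ 2 * (w p.1 * w p.2) =
      (f (t - p.1) ^ 2 * w p.1) * w p.2 + w p.1 * (f (t - p.2) ^ 2 * w p.2) -
        2 * ((f (t - p.1) * w p.1) * (f (t - p.2) * w p.2)) := fun p => by ring
  simp_rw [key]
  have hadd : Integrable (fun p : ℝ × ℝ =>
      (f (t - p.1) ^ 2 * w p.1) * w p.2 + w p.1 * (f (t - p.2) ^ 2 * w p.2))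
      ((volume : Measure ℝ).prod volume) := (h2.mul_prod h0).add (h0.mul_prod h2)
  rw [Measure.volume_eq_prod, integral_sub hadd ((h1.mul_prod h1).const_mul 2),
    integral_add (h2.mul_prod h0) (h0.mul_prod h2),
    integral_const_mul, integral_prod_mul (fun s => f (t - s) ^ 2 * w s) w,
    integral_prod_mul w (fun s => f (t - s) ^ 2 * w s),
    integral_prod_mul (fun s => f (t - s) * w s) (fun s => f (t - s) * w s), hw0]
  ring

lemma integral_mul_add_mul {f g w : ℝ → ℝ} (hf : LocallyIntegrable f)
    (hg : LocallyIntegrable g) (hw : Continuous w) (hwc : HasCompactSupport w) (t : ℝ) :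
    ∫ p : ℝ × ℝ, (f (t - p.1) * g (t - p.2) + f (t - p.2) * g (t - p.1)) * (w p.1 * w p.2) =
      2 * ((∫ s, f (t - s) * w s) * ∫ s, g (t - s) * w s) := by
  have h1 := integrable_comp_sub_mul hf hw hwc t
  have h2 := integrable_comp_sub_mul hg hw hwc t
  have key : ∀ p : ℝ × ℝ,
      (f (t - p.1) * g (t - p.2) + f (t - p.2) * g (t - p.1)) * (w p.1 * w p.2) =
      (f (t - p.1) * w p.1) * (g (t - p.2) * w p.2) +
        (g (t - p.1) * w p.1) * (f (t - p.2) * w p.2) := fun p => by ring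
  simp_rw [key]
  rw [Measure.volume_eq_prod, integral_add (h1.mul_prod h2) (h2.mul_prod h1),
    integral_prod_mul (fun s => f (t - s) * w s) (fun s => g (t - s) * w s),
    integral_prod_mul (fun s => g (t - s) * w s) (fun s => f (t - s) * w s)]
  ring

lemma truncPow_sub_succ_sq_le {α u : ℝ} (hα0 : 0 < α) (hα1 : α < 1) (hu : 1 < u) :
    (truncPow α (u + 1) - truncPow α u) ^ 2 ≤ u ^ (-2 : ℝ) := by
  have hu0 : 0 < u := by linarith
  rw [truncPow_of_pos hu0, truncPow_of_pos (by linarith : 0 < u + 1)]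
  have h1 : (u + 1) ^ (-α) = u ^ (-α) * (u / (u + 1)) ^ α := by
    rw [Real.div_rpow hu0.le (by linarith), Real.rpow_neg hu0.le, Real.rpow_neg (by linarith)]
    field_simp
  have hq : u / (u + 1) ≤ 1 := by
    rw [div_le_one (by linarith)]
    linarith
  have h2 : u / (u + 1) ≤ (u / (u + 1)) ^ α := by
    simpa using Real.rpow_le_rpow_of_exponent_ge (by positivity) hq hα1.le
  have h3 : (u / (u + 1)) ^ α ≤ 1 := Real.rpow_le_one (by positivity) hq hα0.le
  have h4 : u ^ (-α) ≤ 1 := Real.rpow_le_one_of_one_le_of_nonpos hu.le (by linarith)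
  have h5 : 0 ≤ u ^ (-α) := by positivity
  have h6 : 1 - u / (u + 1) ≤ u⁻¹ := by
    have : 1 - u / (u + 1) = (u + 1)⁻¹ := by
      field_simp
      ring
    rw [this]
    exact inv_anti₀ hu0 (by linarith)
  have h7 : u ^ (-2 : ℝ) = u⁻¹ ^ 2 := by
    rw [Real.rpow_neg hu0.le, inv_pow]
    norm_cast
  rw [h7, h1, ← neg_sq, neg_sub, ← mul_one_sub]
  refine pow_le_pow_left₀ (mul_nonneg h5 (by linarith)) ?_ 2
  calc _ ≤ 1 * (1 - (u / (u + 1)) ^ α) := mul_le_mul_of_nonneg_right h4 (by linarith)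
    _ ≤ u⁻¹ := by linarith

lemma integrable_truncPow_sub_sq {α : ℝ} (hα0 : 0 < α) (hα : α < 1 / 2) :
    Integrable (fun t => (truncPow α t - truncPow α (t - 1)) ^ 2) := by
  have hloc := locallyIntegrable_truncPow (α := 2 * α) (by linarith)
  have hA : IntegrableOn (fun t => truncPow (2 * α) t + truncPow (2 * α) (t - 1)) (Icc 0 2) := by
    refine (hloc.integrableOn_isCompact isCompact_Icc).add ?_
    have h := (hloc.integrableOn_isCompact (isCompact_Icc (a := -1) (b := 1))).integrable_indicator
      measurableSet_Icc |>.comp_sub_right 1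
    refine h.integrableOn.congr_fun (fun t ht => ?_) measurableSet_Icc
    exact indicator_of_mem (by constructor <;> linarith [ht.1, ht.2]) _
  have hB : IntegrableOn (fun t : ℝ => (t - 1) ^ (-2 : ℝ)) (Ioi 2) :=
    integrableOn_add_rpow_Ioi_of_lt (m := -1) (by norm_num) (by norm_num)
  refine ((hA.integrable_indicator measurableSet_Icc).add
    (hB.integrable_indicator measurableSet_Ioi)).mono' (by fun_prop) (Eventually.of_forall ?_)
  intro t
  rw [Real.norm_of_nonneg (sq_nonneg _), Pi.add_apply]
  rcases lt_or_ge t 0 with h0 | h0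
  · rw [truncPow_of_nonpos h0.le, truncPow_of_nonpos (by linarith : t - 1 ≤ 0)]
    rw [indicator_of_notMem (by simp [h0]), indicator_of_notMem (by simp; linarith)]
    simp
  rcases lt_or_ge 2 t with h2 | h2
  · rw [indicator_of_notMem (by simp [h2]), indicator_of_mem (mem_Ioi.2 h2), zero_add]
    simpa using truncPow_sub_succ_sq_le hα0 (by linarith) (by linarith : 1 < t - 1)
  · rw [indicator_of_mem (mem_Icc.2 ⟨h0, h2⟩), indicator_of_notMem (by simpa using h2), add_zero,
      ← truncPow_sq, ← truncPow_sq]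
    nlinarith [mul_nonneg (truncPow_nonneg α t) (truncPow_nonneg α (t - 1))]

lemma integrable_truncPow_mul_truncPow_one_sub {α : ℝ} (hα : α < 1 / 2) :
    Integrable (fun t => truncPow α t * truncPow α (1 - t)) := by
  have hloc := locallyIntegrable_truncPow (α := 2 * α) (by linarith)
  have hA := (hloc.integrableOn_isCompact (isCompact_Icc (a := 0) (b := 1))).integrable_indicator
      measurableSet_Icc
  refine (hA.add (hA.comp_sub_left 1)).mono' (by fun_prop) (Eventually.of_forall fun t => ?_)
  rw [Real.norm_of_nonneg (mul_nonneg (truncPow_nonneg _ _) (truncPow_nonneg _ _)), Pi.add_apply]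
  by_cases ht : t ∈ Icc (0 : ℝ) 1
  · have ht' : 1 - t ∈ Icc (0 : ℝ) 1 := ⟨by linarith [ht.2], by linarith [ht.1]⟩
    rw [indicator_of_mem ht, indicator_of_mem ht', ← truncPow_sq, ← truncPow_sq]
    nlinarith [sq_nonneg (truncPow α t - truncPow α (1 - t)), sq_nonneg (truncPow α t),
      sq_nonneg (truncPow α (1 - t))]
  · have h0 : truncPow α t * truncPow α (1 - t) = 0 := by
      by_cases h : t ≤ 0
      · simp [truncPow_of_nonpos h]
      · have : 1 - t ≤ 0 := by
          by_contra h'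
          exact ht ⟨by linarith, by linarith⟩
        simp [truncPow_of_nonpos this]
    rw [h0]
    exact add_nonneg (indicator_nonneg (fun _ _ => truncPow_nonneg _ _) _)
      (indicator_nonneg (fun _ _ => truncPow_nonneg _ _) _)

lemma integral_truncPow_mul_truncPow_one_sub_pos {α : ℝ} (hα : α < 1 / 2) :
    0 < ∫ t, truncPow α t * truncPow α (1 - t) := by
  rw [integral_pos_iff_support_of_nonneg
    (fun t => mul_nonneg (truncPow_nonneg _ _) (truncPow_nonneg _ _))
    (integrable_truncPow_mul_truncPow_one_sub hα)]
  refine lt_of_lt_of_le (b := volume (Ioo (0 : ℝ) 1)) (by simp) (measure_mono fun t ht => ?_)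
  have h1 : 0 < 1 - t := sub_pos.2 ht.2
  rw [Function.mem_support, truncPow_of_pos ht.1, truncPow_of_pos h1]
  have := ht.1
  positivity

/-- The energies of the left and right potentials `∫ (t-s)₊^(-α) w(s) ds` and
`∫ (s-t)₊^(-α) w(s) ds` of a mean-zero `w` are both a fixed multiple of minus their pairing. -/
lemma exists_integral_sq_eq_neg_integral_mul {α : ℝ} (hα0 : 0 < α) (hα : α < 1 / 2) :
    ∃ c : ℝ, 0 ≤ c ∧ ∀ w L R : ℝ → ℝ, Continuous w → HasCompactSupport w → ∫ s, w s = 0 →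
      (∀ t, L t = ∫ s, truncPow α (t - s) * w s) → (∀ t, R t = ∫ s, truncPow α (s - t) * w s) →
      Integrable (fun t => L t ^ 2) ∧ Integrable (fun t => R t ^ 2) ∧
      Integrable (fun t => L t * R t) ∧
      ∫ t, L t ^ 2 = c * -∫ t, L t * R t ∧ ∫ t, R t ^ 2 = c * -∫ t, L t * R t := by
  have hloc := locallyIntegrable_truncPow (α := α) (by linarith)
  have hloc' := hloc.comp_neg_real
  have hsq : LocallyIntegrable fun u => truncPow α u ^ 2 := by
    simpa only [truncPow_sq] using locallyIntegrable_truncPow (α := 2 * α) (by linarith)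
  have hsq' : LocallyIntegrable fun u => truncPow α (-u) ^ 2 := hsq.comp_neg_real
  have hpow : ∀ a : ℝ, 0 < a → a ^ (-(2 * α)) = a ^ (-α) * a ^ (-α) := fun a ha => by
    rw [← Real.rpow_add ha]
    congr 1
    ring
  have hscale : ∀ a b x y : ℝ, 0 < a →
      truncPow α (a * x + b - (a * y + b)) = a ^ (-α) * truncPow α (x - y) := fun a b x y ha => by
    rw [← truncPow_mul ha]
    congr 1
    ring
  have hvanish : ∀ x y : ℝ, truncPow α (x - y) * truncPow α (y - x) = 0 := fun x y => by
    rcases le_total x y with h | h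
    · rw [truncPow_of_nonpos (sub_nonpos.2 h), zero_mul]
    · rw [truncPow_of_nonpos (sub_nonpos.2 h), mul_zero]
  let A : ℝ → ℝ × ℝ → ℝ := fun t p => (truncPow α (t - p.1) - truncPow α (t - p.2)) ^ 2
  let B : ℝ → ℝ × ℝ → ℝ := fun t p => truncPow α (t - p.1) * truncPow α (p.2 - t) +
    truncPow α (t - p.2) * truncPow α (p.1 - t)
  have hA := integrable_and_integral_of_homogeneous hα (K := A) (fun t s r => by simp only [A]; ring)
    (fun t s => by simp [A])
    (fun a b t s r ha => by simp only [A]; rw [hscale _ _ _ _ ha, hscale _ _ _ _ ha, hpow a ha]; ring)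
    (by simpa [A] using integrable_truncPow_sub_sq hα0 hα)
  have hB01 : ∀ t, B t (0, 1) = truncPow α t * truncPow α (1 - t) := fun t => by
    have : truncPow α (t - 1) * truncPow α (0 - t) = 0 := by
      rcases le_total t 0 with h | h
      · rw [truncPow_of_nonpos (by linarith : t - 1 ≤ 0), zero_mul]
      · rw [truncPow_of_nonpos (by linarith : 0 - t ≤ 0), mul_zero]
    simp only [B]
    rw [this, sub_zero, add_zero]
  have hB := integrable_and_integral_of_homogeneous hα (K := B) (fun t s r => by simp only [B]; ring)
    (fun t s => by simp only [B]; rw [hvanish, add_zero])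
    (fun a b t s r ha => by
      simp only [B]
      rw [hscale _ _ _ _ ha, hscale _ _ _ _ ha, hscale _ _ _ _ ha, hscale _ _ _ _ ha, hpow a ha]
      ring)
    (by simpa only [hB01] using integrable_truncPow_mul_truncPow_one_sub hα)
  have hA' : ∀ p : ℝ × ℝ, Integrable (fun t => A (p.1 + p.2 - t) p) ∧
      ∫ t, A (p.1 + p.2 - t) p = (∫ t, A t (0, 1)) * |p.1 - p.2| ^ (1 - 2 * α) := fun p =>
    ⟨(hA p).1.comp_sub_left _, by rw [integral_sub_left_eq_self (fun t => A t p), (hA p).2]⟩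
  have hβ : 0 < 1 - 2 * α := by linarith
  have hBpos : 0 < ∫ t, B t (0, 1) := by
    simpa only [hB01] using integral_truncPow_mul_truncPow_one_sub_pos hα
  have hApos : 0 ≤ ∫ t, A t (0, 1) := integral_nonneg fun t => sq_nonneg _
  refine ⟨(∫ t, A t (0, 1)) / ∫ t, B t (0, 1), by positivity, ?_⟩
  intro w L R hw hwc hw0 hL hR
  have hR' : ∀ t, R t = ∫ s, truncPow α (-(t - s)) * w s := fun t => by simp only [hR, neg_sub]
  obtain ⟨iL, eL⟩ := integrable_and_integral_of_kernel (m := fun t => -2 * L t ^ 2) hβ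
    (by simp only [Function.uncurry_def]; fun_prop) (fun t p => sq_nonneg _) hA hw hwc
    (fun t => by rw [hL]; exact integral_sq_sub_mul hloc hsq hw hwc hw0 t)
  obtain ⟨iR, eR⟩ := integrable_and_integral_of_kernel (m := fun t => -2 * R t ^ 2) hβ
    (K := fun t p => A (p.1 + p.2 - t) p)
    (by simp only [A, Function.uncurry_def]; fun_prop) (fun t p => sq_nonneg _) hA' hw hwc
    (fun t => by
      rw [hR', ← integral_sq_sub_mul hloc' hsq' hw hwc hw0 t]
      refine integral_congr_ae (Eventually.of_forall fun p => ?_)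
      simp only [A]
      rw [show p.1 + p.2 - t - p.1 = -(t - p.2) by ring,
        show p.1 + p.2 - t - p.2 = -(t - p.1) by ring]
      ring)
  obtain ⟨iB, eB⟩ := integrable_and_integral_of_kernel (m := fun t => 2 * (L t * R t)) hβ
    (by simp only [Function.uncurry_def]; fun_prop)
    (fun t p => add_nonneg (mul_nonneg (truncPow_nonneg _ _) (truncPow_nonneg _ _))
      (mul_nonneg (truncPow_nonneg _ _) (truncPow_nonneg _ _))) hB hw hwc
    (fun t => by
      rw [hL, hR', ← integral_mul_add_mul hloc hloc' hw hwc t]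
      simp only [neg_sub])
  rw [integral_const_mul] at eL eR eB
  refine ⟨?_, ?_, ?_, ?_, ?_⟩
  · simpa using iL.const_mul (-2)⁻¹
  · simpa using iR.const_mul (-2)⁻¹
  · simpa using iB.const_mul 2⁻¹
  · field_simp
    linear_combination (-(∫ t, B t (0, 1)) / 2) * eL - ((∫ t, A t (0, 1)) / 2) * (-eB)
  · field_simp
    linear_combination (-(∫ t, B t (0, 1)) / 2) * eR - ((∫ t, A t (0, 1)) / 2) * (-eB)

lemma abs_integral_mul_le_of_sq_le {X : Type*} [MeasurableSpace X] {μ : Measure X} {a b : X → ℝ}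
    {c : ℝ} (hc : 0 < c) (ha : Integrable (fun x => a x ^ 2) μ)
    (hb : Integrable (fun x => b x ^ 2) μ) (hab : Integrable (fun x => a x * b x) μ)
    (h : ∫ x, a x ^ 2 ∂μ ≤ c * |∫ x, a x * b x ∂μ|) :
    |∫ x, a x * b x ∂μ| ≤ c * ∫ x, b x ^ 2 ∂μ := by
  have key : |∫ x, a x * b x ∂μ| ≤ ∫ x, ((2 * c)⁻¹ * a x ^ 2 + c / 2 * b x ^ 2) ∂μ := by
    refine (abs_integral_le_integral_abs).trans
      (integral_mono hab.abs ((ha.const_mul _).add (hb.const_mul _)) fun x => ?_)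
    have h1 : (2 * c)⁻¹ * a x ^ 2 + c / 2 * b x ^ 2 =
        (2 * c)⁻¹ * (|a x| - c * |b x|) ^ 2 + |a x * b x| := by
      rw [abs_mul, ← sq_abs (a x), ← sq_abs (b x)]
      field_simp
      ring
    simp only [h1, le_add_iff_nonneg_left]
    positivity
  rw [integral_add (ha.const_mul _) (hb.const_mul _), integral_const_mul, integral_const_mul] at key
  have h2 : (2 * c)⁻¹ * ∫ x, a x ^ 2 ∂μ ≤ |∫ x, a x * b x ∂μ| / 2 := by
    calc _ ≤ (2 * c)⁻¹ * (c * |∫ x, a x * b x ∂μ|) := mul_le_mul_of_nonneg_left h (by positivity)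
      _ = _ := by field_simp
  linarith

lemma integral_rlKernel_left {α τ : ℝ} {v : ℝ → ℝ} (hτ : 0 ≤ τ) (hv : ∀ s ≤ 0, v s = 0) :
    ∫ s in (0 : ℝ)..τ, rlKernel (1 - α) (τ - s) * v s =
      (∫ s, truncPow α (τ - s) * v s) / Real.Gamma (1 - α) := by
  rw [intervalIntegral.integral_of_le hτ, integral_Ioc_eq_integral_Ioo, ← integral_div,
    ← integral_indicator measurableSet_Ioo]
  congr 1 with s
  by_cases hs : s ∈ Ioo 0 τ
  · rw [indicator_of_mem hs, truncPow_of_pos (sub_pos.2 hs.2), rlKernel,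
      show 1 - α - 1 = -α by ring]
    ring
  · rw [indicator_of_notMem hs]
    rcases le_or_gt s 0 with h | h
    · simp [hv s h]
    · have : τ - s ≤ 0 := by
        by_contra h'
        exact hs ⟨h, by linarith⟩
      simp [truncPow_of_nonpos this]

lemma integral_rlKernel_right {α τ T : ℝ} {v : ℝ → ℝ} (hτ : τ ≤ T) (hv : ∀ s, T ≤ s → v s = 0) :
    ∫ s in τ..T, rlKernel (1 - α) (s - τ) * v s =
      (∫ s, truncPow α (s - τ) * v s) / Real.Gamma (1 - α) := by
  rw [intervalIntegral.integral_of_le hτ, integral_Ioc_eq_integral_Ioo, ← integral_div,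
    ← integral_indicator measurableSet_Ioo]
  congr 1 with s
  by_cases hs : s ∈ Ioo τ T
  · rw [indicator_of_mem hs, truncPow_of_pos (sub_pos.2 hs.1), rlKernel,
      show 1 - α - 1 = -α by ring]
    ring
  · rw [indicator_of_notMem hs]
    rcases le_or_gt T s with h | h
    · simp [hv s h]
    · have : s - τ ≤ 0 := by
        by_contra h'
        exact hs ⟨by linarith, h⟩
      simp [truncPow_of_nonpos this]

/-- Norm equivalences between the left and right Riemann–Liouville fractional derivatives
of order `0 < α < 1/2` for smooth compactly supported functions:
(i) `∫ (D_{0+}^α v)² ≤ c₁ |∫ (D_{0+}^α v)(D_{T-}^α v)|`,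
(ii) `|∫ (D_{0+}^α v)(D_{T-}^α v)| ≤ c₂ ∫ (D_{T-}^α v)²`,
(iii) `∫ (D_{T-}^α v)² ≤ c₃ ∫ (D_{0+}^α v)²`. -/
theorem rl_seminorm_equivalence (α : ℝ) (hα0 : 0 < α) (hα2 : α < 1 / 2) :
    ∃ c₁ c₂ c₃ : ℝ, 0 < c₁ ∧ 0 < c₂ ∧ 0 < c₃ ∧
      ∀ T : ℝ, 0 < T → ∀ v : ℝ → ℝ, ContDiff ℝ (⊤ : ℕ∞) v → HasCompactSupport v →
        tsupport v ⊆ Set.Ioo 0 T →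
        ∀ DL DR : ℝ → ℝ,
          (∀ t ∈ Set.Ioo (0 : ℝ) T,
            HasDerivAt (fun τ => ∫ s in (0:ℝ)..τ, rlKernel (1 - α) (τ - s) * v s) (DL t) t) →
          (∀ t ∈ Set.Ioo (0 : ℝ) T,
            HasDerivAt (fun τ => ∫ s in τ..T, rlKernel (1 - α) (s - τ) * v s) (-(DR t)) t) →
          ((∫ t in (0:ℝ)..T, (DL t) ^ 2) ≤ c₁ * |∫ t in (0:ℝ)..T, DL t * DR t|) ∧
          (|∫ t in (0:ℝ)..T, DL t * DR t| ≤ c₂ * ∫ t in (0:ℝ)..T, (DR t) ^ 2) ∧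
          ((∫ t in (0:ℝ)..T, (DR t) ^ 2) ≤ c₃ * ∫ t in (0:ℝ)..T, (DL t) ^ 2) := by
  obtain ⟨c, hc, hcore⟩ := exists_integral_sq_eq_neg_integral_mul hα0 hα2
  have hc1 : 0 < c + 1 := by linarith
  refine ⟨c + 1, c + 1, (c + 1) * (c + 1), hc1, hc1, mul_pos hc1 hc1, ?_⟩
  intro T hT v hv hvc hvT DL DR hDL hDR
  have hv1 : ContDiff ℝ 1 v := hv.of_le (by exact_mod_cast le_top)
  have hw : Continuous (deriv v) := hv1.continuous_deriv le_rfl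
  have hwc : HasCompactSupport (deriv v) := hvc.deriv
  have hw0 : ∫ s, deriv v s = 0 := integral_eq_zero_of_hasDerivAt_of_integrable
    (fun x => (hv1.differentiable one_ne_zero x).hasDerivAt)
    (hw.integrable_of_hasCompactSupport hwc) (hv1.continuous.integrable_of_hasCompactSupport hvc)
  have hv0 : ∀ s, s ∉ Ioo 0 T → v s = 0 := fun s hs =>
    image_eq_zero_of_notMem_tsupport fun h => hs (hvT h)
  have hdv0 : ∀ s, s ∉ Ioo 0 T → deriv v s = 0 := fun s hs =>
    image_eq_zero_of_notMem_tsupport fun h => hs (hvT (tsupport_deriv_subset h))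
  have hloc := locallyIntegrable_truncPow (α := α) (by linarith)
  have hΓ : 0 < Real.Gamma (1 - α) := Real.Gamma_pos_of_pos (by linarith)
  obtain ⟨L, hL⟩ : ∃ L : ℝ → ℝ, ∀ t, L t = ∫ s, truncPow α (t - s) * deriv v s :=
    ⟨_, fun _ => rfl⟩
  obtain ⟨R, hR⟩ : ∃ R : ℝ → ℝ, ∀ t, R t = ∫ s, truncPow α (s - t) * deriv v s :=
    ⟨_, fun _ => rfl⟩
  obtain ⟨iL, iR, iLR, eL, eR⟩ := hcore _ L R hw hwc hw0 hL hR
  have hDL' : ∀ t ∈ Ioo 0 T, DL t = L t / Real.Gamma (1 - α) := fun t ht => by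
    rw [hL]
    refine (hDL t ht).unique (((hasDerivAt_integral_comp_sub_mul hloc hv1 hvc t).div_const
      _).congr_of_eventuallyEq ?_)
    filter_upwards [Ioi_mem_nhds ht.1] with τ hτ
    rw [integral_rlKernel_left (le_of_lt hτ) fun s hs => hv0 s fun h => hs.not_gt h.1]
  have hDR' : ∀ t ∈ Ioo 0 T, DR t = -(R t / Real.Gamma (1 - α)) := fun t ht => by
    have h := hasDerivAt_integral_comp_sub_mul hloc.comp_neg_real hv1 hvc t
    simp only [neg_sub] at h
    rw [hR, ← neg_eq_iff_eq_neg]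
    refine (hDR t ht).unique ((h.div_const _).congr_of_eventuallyEq ?_)
    filter_upwards [Iio_mem_nhds ht.2] with τ hτ
    rw [integral_rlKernel_right (le_of_lt hτ) fun s hs => hv0 s fun h => hs.not_gt h.2]
  have hLR : ∫ t in Ioo 0 T, L t * R t = ∫ t, L t * R t := by
    refine setIntegral_eq_integral_of_forall_compl_eq_zero fun t ht => ?_
    rw [mem_Ioo, not_and_or, not_lt, not_lt] at ht
    rcases ht with ht | ht
    · rw [hL, integral_eq_zero_of_ae, zero_mul]
      refine Eventually.of_forall fun s => ?_
      by_cases hs : s ∈ Ioo 0 T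
      · simp [truncPow_of_nonpos (by linarith [hs.1] : t - s ≤ 0)]
      · simp [hdv0 s hs]
    · rw [hR, integral_eq_zero_of_ae, mul_zero]
      refine Eventually.of_forall fun s => ?_
      by_cases hs : s ∈ Ioo 0 T
      · simp [truncPow_of_nonpos (by linarith [hs.2] : s - t ≤ 0)]
      · simp [hdv0 s hs]
  have hLle : ∫ t in Ioo 0 T, L t ^ 2 ≤ (c + 1) * |∫ t in Ioo 0 T, L t * R t| := by
    refine (setIntegral_le_integral iL (Eventually.of_forall fun _ => sq_nonneg _)).trans ?_
    rw [eL, hLR]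
    calc _ ≤ c * |∫ t, L t * R t| := mul_le_mul_of_nonneg_left (neg_le_abs _) hc
      _ ≤ _ := mul_le_mul_of_nonneg_right (by linarith) (abs_nonneg _)
  have hRle : ∫ t in Ioo 0 T, R t ^ 2 ≤ (c + 1) * |∫ t in Ioo 0 T, L t * R t| := by
    refine (setIntegral_le_integral iR (Eventually.of_forall fun _ => sq_nonneg _)).trans ?_
    rw [eR, hLR]
    calc _ ≤ c * |∫ t, L t * R t| := mul_le_mul_of_nonneg_left (neg_le_abs _) hc
      _ ≤ _ := mul_le_mul_of_nonneg_right (by linarith) (abs_nonneg _)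
  have hZ := abs_integral_mul_le_of_sq_le hc1 iL.integrableOn iR.integrableOn iLR.integrableOn hLle
  have hZ' : |∫ t in Ioo 0 T, L t * R t| ≤ (c + 1) * ∫ t in Ioo 0 T, L t ^ 2 := by
    simp only [mul_comm (L _)] at hRle iLR ⊢
    exact abs_integral_mul_le_of_sq_le hc1 iR.integrableOn iL.integrableOn iLR.integrableOn hRle
  have toIoo : ∀ F G : ℝ → ℝ, (∀ t ∈ Ioo 0 T, F t = (Real.Gamma (1 - α) ^ 2)⁻¹ * G t) →
      ∫ t in (0 : ℝ)..T, F t = (Real.Gamma (1 - α) ^ 2)⁻¹ * ∫ t in Ioo 0 T, G t :=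
    fun F G hFG => by
      rw [intervalIntegral.integral_of_le hT.le, integral_Ioc_eq_integral_Ioo,
        setIntegral_congr_fun measurableSet_Ioo hFG, integral_const_mul]
  have hk : 0 < (Real.Gamma (1 - α) ^ 2)⁻¹ := by positivity
  rw [toIoo (fun t => DL t ^ 2) (fun t => L t ^ 2) fun t ht => by rw [hDL' t ht]; field_simp,
    toIoo (fun t => DR t ^ 2) (fun t => R t ^ 2) fun t ht => by rw [hDR' t ht]; field_simp,
    toIoo (fun t => DL t * DR t) (fun t => -(L t * R t)) fun t ht => by
      rw [hDL' t ht, hDR' t ht]; field_simp,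
    integral_neg, mul_neg, abs_neg, abs_mul, abs_of_pos hk, mul_left_comm, mul_left_comm (c + 1),
    mul_left_comm ((c + 1) * (c + 1))]
  refine ⟨mul_le_mul_of_nonneg_left hLle hk.le, mul_le_mul_of_nonneg_left hZ hk.le,
    mul_le_mul_of_nonneg_left (hRle.trans ?_) hk.le⟩
  rw [mul_assoc]
  exact mul_le_mul_of_nonneg_left hZ' hc1.le
end

section
/- Let T > 0, 0 < α < 1, r ≥ 1, p ≥ 1 an integer, and let v satisfy the regularity condition with constants C₀ > 0 and σ ∈ (0,1), where moreover σ ≤ p + (p+1)/α. Then there exists C > 0 depending only on p, σ, α, r, C₀ and T (in particular independent of N and n) such that for every integer N ≥ 1 and every 1 ≤ n ≤ N: ∫_0^{t_n} ((D_{0+}^{α/2} η_v)(t))² dt ≤ C · B, where B = N^{−r(1+2σ−α)} if 1 ≤ r < (2p+2−α)/(1+2σ−α); B = N^{−2p−2+α}(1 + ln n) if r = (2p+2−α)/(1+2σ−α); and B = N^{−2p−2+α} · t_n^{1+2σ−α−(2p+2−α)/r} if r > (2p+2−α)/(1+2σ−α). -/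
/-- The graded mesh `t_n = (n/N)^r * T`. -/
noncomputable def gradedMesh (T r : ℝ) (N n : ℕ) : ℝ := ((n : ℝ) / (N : ℝ)) ^ r * T

/-- The bound `B` of Lemma 6 of the paper:
`B = N^{-r(1+2σ-α)}` if `r < (2p+2-α)/(1+2σ-α)`,
`B = N^{-2p-2+α}(1+ln n)` if `r = (2p+2-α)/(1+2σ-α)`,
`B = N^{-2p-2+α} t_n^{1+2σ-α-(2p+2-α)/r}` if `r > (2p+2-α)/(1+2σ-α)`. -/
noncomputable def halfDerivBound (T r α σ : ℝ) (p N n : ℕ) : ℝ :=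
  if r < (2 * (p : ℝ) + 2 - α) / (1 + 2 * σ - α) then
    (N : ℝ) ^ (-(r * (1 + 2 * σ - α)))
  else if r = (2 * (p : ℝ) + 2 - α) / (1 + 2 * σ - α) then
    (N : ℝ) ^ (-2 * (p : ℝ) - 2 + α) * (1 + Real.log n)
  else
    (N : ℝ) ^ (-2 * (p : ℝ) - 2 + α) *
      gradedMesh T r N n ^ (1 + 2 * σ - α - (2 * (p : ℝ) + 2 - α) / r)

/-- Powers of comparable positive numbers are comparable. -/
theorem rpow_le_of_comparable {x y R : ℝ} (hx : 0 < x) (hy : 0 < y) (hR : 1 ≤ R)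
    (hxy : x ≤ R * y) (hyx : y ≤ R * x) (d : ℝ) : x ^ d ≤ R ^ |d| * y ^ d := by
  have hR0 : 0 < R := by linarith
  rcases le_total 0 d with hd | hd
  · rw [abs_of_nonneg hd, ← Real.mul_rpow hR0.le hy.le]
    exact Real.rpow_le_rpow hx.le hxy hd
  · rw [abs_of_nonpos hd]
    have h : (R * x) ^ d ≤ y ^ d := Real.rpow_le_rpow_of_nonpos hy hyx hd
    rw [Real.mul_rpow hR0.le hx.le] at h
    have h2 : R ^ (-d) * (R ^ d * x ^ d) ≤ R ^ (-d) * y ^ d := by gcongr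
    rwa [← mul_assoc, ← Real.rpow_add hR0, neg_add_cancel, Real.rpow_zero, one_mul] at h2

/-- A Beta-type product of powers is dominated by the sum of its two endpoint singularities. -/
theorem rpow_mul_rpow_le_of_add {x y t : ℝ} (hx : 0 < x) (hy : 0 < y) (ht : x + y = t) (c d : ℝ) :
    x ^ c * y ^ d ≤ (2 ^ |c| + 2 ^ |d|) * (t ^ d * x ^ c + t ^ c * y ^ d) := by
  have ht0 : 0 < t := by linarith
  have h1 : 0 < x ^ c := Real.rpow_pos_of_pos hx c
  have h2 : 0 < y ^ d := Real.rpow_pos_of_pos hy d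
  have h3 : 0 < t ^ c := Real.rpow_pos_of_pos ht0 c
  have h4 : 0 < t ^ d := Real.rpow_pos_of_pos ht0 d
  have h5 : (0:ℝ) < 2 ^ |c| := by positivity
  have h6 : (0:ℝ) < 2 ^ |d| := by positivity
  rcases le_total x y with h | h
  · have := rpow_le_of_comparable hy ht0 one_le_two (by linarith) (by linarith) d
    calc x ^ c * y ^ d ≤ x ^ c * (2 ^ |d| * t ^ d) := by gcongr
      _ = 2 ^ |d| * (t ^ d * x ^ c) := by ring
      _ ≤ _ := by gcongr <;> linarith [mul_pos h3 h2]
  · have := rpow_le_of_comparable hx ht0 one_le_two (by linarith) (by linarith) c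
    calc x ^ c * y ^ d ≤ (2 ^ |c| * t ^ c) * y ^ d := by gcongr
      _ = 2 ^ |c| * (t ^ c * y ^ d) := by ring
      _ ≤ _ := by gcongr <;> linarith [mul_pos h4 h1]

/-- If the first function of a chain of derivatives has `m` zeros in `[a, b]`, then a bound for the
`m`-th derivative propagates to all lower ones. -/
theorem abs_le_of_zeros {a b K : ℝ} (hab : a ≤ b) (hK : 0 ≤ K) (m : ℕ) :
    ∀ (f : ℕ → ℝ → ℝ) (x : ℕ → ℝ),
      (∀ i < m, ∀ y ∈ Set.Icc a b, HasDerivWithinAt (f i) (f (i + 1) y) (Set.Icc a b) y) →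
      (∀ j < m, x j ∈ Set.Icc a b ∧ f 0 (x j) = 0) →
      (∀ j, j + 1 < m → x j < x (j + 1)) →
      (∀ y ∈ Set.Icc a b, |f m y| ≤ K) →
      ∀ i ≤ m, ∀ y ∈ Set.Icc a b, |f i y| ≤ K * (b - a) ^ (m - i) := by
  induction m with
  | zero =>
    intro f x _ _ _ hb i hi y hy
    obtain rfl : i = 0 := by omega
    simpa using hb y hy
  | succ m ih =>
    intro f x hf hx hmono hb
    have hrolle : ∀ j, ∃ c, j < m → c ∈ Set.Ioo (x j) (x (j + 1)) ∧ f 1 c = 0 := by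
      intro j
      by_cases hj : j < m
      · obtain ⟨h1, h2⟩ := hx j (by omega)
        obtain ⟨h3, h4⟩ := hx (j + 1) (by omega)
        have hsub : Set.Icc (x j) (x (j + 1)) ⊆ Set.Icc a b := Set.Icc_subset_Icc h1.1 h3.2
        obtain ⟨c, hc, hc0⟩ := exists_hasDerivAt_eq_zero (f := f 0) (f' := f 1)
          (hmono j (by omega))
          (fun y hy => (hf 0 (by omega) y (hsub hy)).continuousWithinAt.mono hsub)
          (by rw [h2, h4])
          (fun y hy => (hf 0 (by omega) y (hsub (Set.Ioo_subset_Icc_self hy))).hasDerivAt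
            (Icc_mem_nhds (by linarith [h1.1, hy.1]) (by linarith [h3.2, hy.2])))
        exact ⟨c, fun _ => ⟨hc, hc0⟩⟩
      · exact ⟨0, fun h => absurd h hj⟩
    choose z hz using hrolle
    have key := ih (fun i => f (i + 1)) z (fun i hi => hf (i + 1) (by omega))
      (fun j hj => ⟨⟨(hx j (by omega)).1.1.trans (hz j hj).1.1.le,
        (hz j hj).1.2.le.trans (hx (j + 1) (by omega)).1.2⟩, (hz j hj).2⟩)
      (fun j hj => (hz j (by omega)).1.2.trans (hz (j + 1) hj).1.1) hb
    intro i hi y hy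
    rcases i with _ | i
    · obtain ⟨h1, h2⟩ := hx 0 (by omega)
      have h := Convex.norm_image_sub_le_of_norm_hasDerivWithin_le (hf 0 (by omega))
        (fun y hy => key 0 (by omega) y hy) (convex_Icc a b) h1 hy
      rw [h2, sub_zero, Real.norm_eq_abs, Real.norm_eq_abs] at h
      have h5 : |y - x 0| ≤ b - a := by
        rw [abs_le]; constructor <;> linarith [h1.1, h1.2, hy.1, hy.2]
      have h6 : 0 ≤ b - a := by linarith
      calc |f 0 y| ≤ _ := h
        _ ≤ K * (b - a) ^ (m - 0) * (b - a) := by gcongr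
        _ = _ := by simp only [Nat.sub_zero]; ring
    · have := key i (by omega) y hy
      simpa using this

/-- Error and Lipschitz bounds for equispaced Lagrange interpolation on an interval where the
interpolated function is smooth. -/
theorem interp_error_of_smooth {T a b K : ℝ} {p : ℕ} (hp : 1 ≤ p) (ha : 0 < a) (hab : a < b)
    (hbT : b ≤ T) (hK : 0 ≤ K) {v : ℝ → ℝ} (hv : ContDiffOn ℝ (p + 1) v (Set.Ioc 0 T))
    (hvK : ∀ y ∈ Set.Icc a b, |iteratedDerivWithin (p + 1) v (Set.Ioc 0 T) y| ≤ K)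
    {q : Polynomial ℝ} (hq : q.degree ≤ p)
    (hnode : ∀ j ≤ p, q.eval (a + (j : ℝ) * (b - a) / (p : ℝ))
      = v (a + (j : ℝ) * (b - a) / (p : ℝ))) :
    (∀ y ∈ Set.Icc a b, |v y - q.eval y| ≤ K * (b - a) ^ (p + 1)) ∧
    (∀ x ∈ Set.Icc a b, ∀ y ∈ Set.Icc a b,
      |(v y - q.eval y) - (v x - q.eval x)| ≤ K * (b - a) ^ p * |y - x|) := by
  have hp0 : (0:ℝ) < p := by exact_mod_cast hp
  have hsub : Set.Icc a b ⊆ Set.Ioc 0 T := fun y hy => ⟨ha.trans_le hy.1, hy.2.trans hbT⟩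
  have huniq : UniqueDiffOn ℝ (Set.Ioc 0 T) := uniqueDiffOn_Ioc 0 T
  set f : ℕ → ℝ → ℝ := fun i y =>
    iteratedDerivWithin i v (Set.Ioc 0 T) y - (Polynomial.derivative^[i] q).eval y with hfdef
  have hf0 : ∀ y, f 0 y = v y - q.eval y := fun y => by simp [hfdef]
  have hf : ∀ i < p + 1, ∀ y ∈ Set.Icc a b,
      HasDerivWithinAt (f i) (f (i + 1) y) (Set.Icc a b) y := by
    intro i hi y hy
    refine HasDerivWithinAt.sub ?_ ?_
    · rw [iteratedDerivWithin_succ]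
      exact ((hv.differentiableOn_iteratedDerivWithin (by exact_mod_cast hi) huniq) y
        (hsub hy)).hasDerivWithinAt.mono hsub
    · rw [Function.iterate_succ_apply']
      exact (Polynomial.hasDerivAt _ _).hasDerivWithinAt
  have hnd : q.natDegree < p + 1 := Nat.lt_succ_of_le (Polynomial.natDegree_le_of_degree_le hq)
  have key := abs_le_of_zeros hab.le hK (p + 1) f (fun j => a + (j : ℝ) * (b - a) / (p : ℝ)) hf
    (fun j hj => by
      have hjp : (j : ℝ) ≤ p := by exact_mod_cast Nat.lt_succ_iff.mp hj
      have hba : 0 < b - a := by linarith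
      refine ⟨⟨?_, ?_⟩, ?_⟩
      · have : 0 ≤ (j : ℝ) * (b - a) / p := by positivity
        linarith
      · have : (j : ℝ) * (b - a) / p ≤ b - a := by
          rw [div_le_iff₀ hp0]; nlinarith
        linarith
      · rw [hf0, hnode j (Nat.lt_succ_iff.mp hj), sub_self])
    (fun j _ => by
      have hba : 0 < b - a := by linarith
      push_cast
      gcongr
      linarith)
    (fun y hy => by
      simpa [hfdef, Polynomial.iterate_derivative_eq_zero hnd] using hvK y hy)
  refine ⟨fun y hy => ?_, fun x hx y hy => ?_⟩
  · simpa [hf0] using key 0 (by omega) y hy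
  · have h := Convex.norm_image_sub_le_of_norm_hasDerivWithin_le (hf 0 (by omega))
      (fun y hy => key 1 (by omega) y hy) (convex_Icc a b) hx hy
    simpa [hf0] using h

/-- The derivative of a polynomial of degree at most `p` is controlled on `[0, 1]` by the values at
the equispaced nodes. -/
theorem exists_abs_derivative_eval_le {p : ℕ} (hp : 1 ≤ p) :
    ∃ C : ℝ, 0 ≤ C ∧ ∀ (q : Polynomial ℝ), q.degree ≤ p → ∀ V : ℝ,
      (∀ j ≤ p, |q.eval ((j : ℝ) / (p : ℝ))| ≤ V) →
      ∀ x ∈ Set.Icc (0:ℝ) 1, |q.derivative.eval x| ≤ C * V := by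
  have hp0 : (0:ℝ) < p := by exact_mod_cast hp
  set s := Finset.range (p + 1) with hs
  set nd : ℕ → ℝ := fun j => (j : ℝ) / (p : ℝ) with hnd
  have hinj : Set.InjOn nd s := fun i _ j _ h => by
    have := (div_left_inj' hp0.ne').mp h
    exact_mod_cast this
  have hbd : ∀ i, ∃ B : ℝ, ∀ x ∈ Set.Icc (0:ℝ) 1,
      |(Lagrange.basis s nd i).derivative.eval x| ≤ B := fun i => by
    obtain ⟨B, hB⟩ := isCompact_Icc.exists_bound_of_continuousOn (s := Set.Icc (0:ℝ) 1)
      (f := fun x => (Lagrange.basis s nd i).derivative.eval x)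
      (Polynomial.continuous _).continuousOn
    exact ⟨B, hB⟩
  choose B hB using hbd
  refine ⟨∑ i ∈ s, |B i|, by positivity, fun q hq V hV x hx => ?_⟩
  have hdeg : q.degree < s.card := by
    rw [hs, Finset.card_range]
    exact lt_of_le_of_lt hq (by exact_mod_cast Nat.lt_succ_self p)
  have hqe := Lagrange.eq_interpolate hinj hdeg
  have : q.derivative.eval x
      = ∑ i ∈ s, q.eval (nd i) * (Lagrange.basis s nd i).derivative.eval x := by
    conv_lhs => rw [hqe]
    simp [Lagrange.interpolate_apply, Polynomial.eval_finsetSum]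
  rw [this, Finset.sum_mul]
  refine (Finset.abs_sum_le_sum_abs _ _).trans (Finset.sum_le_sum fun i hi => ?_)
  rw [abs_mul, mul_comm]
  have hi' : i ≤ p := Nat.lt_succ_iff.mp (Finset.mem_range.mp hi)
  have := hV i hi'
  exact mul_le_mul ((hB i x hx).trans (le_abs_self _)) this (abs_nonneg _) (abs_nonneg _)

/-- Error and increment bounds for equispaced Lagrange interpolation on an initial interval
`[0, b]`, for a function with a weak singularity at the origin. -/
theorem exists_interp_error_of_singular {p : ℕ} (hp : 1 ≤ p) {σ C₀ C₁ : ℝ} (hσ0 : 0 < σ)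
    (hσ1 : σ < 1) (hC₀ : 0 ≤ C₀) (hC₁ : 0 ≤ C₁) :
    ∃ C : ℝ, 0 ≤ C ∧ ∀ (b : ℝ), 0 < b → ∀ (v : ℝ → ℝ) (q : Polynomial ℝ),
      (∀ t ∈ Set.Ioc 0 b, |v t - v 0| ≤ C₀ * t ^ σ) →
      (∀ x y, 0 < x → x ≤ y → y ≤ b → |v y - v x| ≤ C₁ * x ^ (σ - 1) * (y - x)) →
      q.degree ≤ p →
      (∀ j ≤ p, q.eval ((j : ℝ) * b / (p : ℝ)) = v ((j : ℝ) * b / (p : ℝ))) →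
      (∀ x ∈ Set.Icc 0 b, |v x - q.eval x| ≤ C * x ^ σ) ∧
      (∀ x y, 0 < x → x ≤ y → y ≤ b →
        |(v y - q.eval y) - (v x - q.eval x)| ≤ C * x ^ (σ - 1) * (y - x)) := by
  obtain ⟨L, hL0, hL⟩ := exists_abs_derivative_eval_le hp
  have hp0 : (0:ℝ) < p := by exact_mod_cast hp
  refine ⟨C₀ + C₁ + L * C₀, by positivity, fun b hb v q hv0 hv1 hq hnode => ?_⟩
  have hq0 : q.eval 0 = v 0 := by simpa using hnode 0 (by omega)
  have hbσ : 0 < b ^ σ := Real.rpow_pos_of_pos hb σ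
  set Q : Polynomial ℝ := (q - Polynomial.C (v 0)).comp (Polynomial.C b * Polynomial.X) with hQ
  have hQdeg : Q.degree ≤ p := by
    have h1 : (q - Polynomial.C (v 0)).natDegree ≤ p :=
      (Polynomial.natDegree_sub_C (a := v 0)).le.trans (Polynomial.natDegree_le_of_degree_le hq)
    refine Polynomial.degree_le_of_natDegree_le ?_
    calc Q.natDegree ≤ _ := Polynomial.natDegree_comp_le
      _ ≤ p * 1 := Nat.mul_le_mul h1 
        ((Polynomial.natDegree_C_mul_le b _).trans Polynomial.natDegree_X_le)
      _ = p := mul_one p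
  have hQn : ∀ j ≤ p, |Q.eval ((j : ℝ) / (p : ℝ))| ≤ C₀ * b ^ σ := by
    intro j hj
    have hval : Q.eval ((j : ℝ) / p) = v ((j : ℝ) * b / p) - v 0 := by
      rw [← hnode j hj]
      simp only [hQ, Polynomial.eval_comp, Polynomial.eval_sub, Polynomial.eval_mul,
        Polynomial.eval_C, Polynomial.eval_X]
      congr 2
      ring
    rw [hval]
    rcases Nat.eq_zero_or_pos j with rfl | hj0
    · simp; positivity
    · have hj0' : (0:ℝ) < j := by exact_mod_cast hj0
      have hjp : (j : ℝ) ≤ p := by exact_mod_cast hj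
      have hle : (j : ℝ) * b / p ≤ b := by rw [div_le_iff₀ hp0]; nlinarith
      refine (hv0 _ ⟨by positivity, hle⟩).trans ?_
      gcongr
  have hder : ∀ x ∈ Set.Icc 0 b, ‖q.derivative.eval x‖ ≤ L * C₀ * b ^ (σ - 1) := by
    intro x hx
    have h := hL Q hQdeg _ hQn (x / b)
      ⟨div_nonneg hx.1 hb.le, (div_le_one hb).mpr hx.2⟩
    have hval : Q.derivative.eval (x / b) = b * q.derivative.eval x := by
      simp [hQ, Polynomial.derivative_comp, Polynomial.eval_comp, mul_div_cancel₀ x hb.ne']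
    rw [hval, abs_mul, abs_of_pos hb] at h
    rw [Real.norm_eq_abs, Real.rpow_sub_one hb.ne']
    rw [← mul_div_assoc, le_div_iff₀ hb]
    linarith
  have hlip : ∀ x y, 0 ≤ x → x ≤ y → y ≤ b →
      |q.eval y - q.eval x| ≤ L * C₀ * b ^ (σ - 1) * (y - x) := by
    intro x y hx hxy hyb
    have h := Convex.norm_image_sub_le_of_norm_hasDerivWithin_le (f := fun x => q.eval x)
      (fun x _ => (Polynomial.hasDerivAt q x).hasDerivWithinAt) hder (convex_Icc 0 b)
      (⟨hx, hxy.trans hyb⟩ : x ∈ Set.Icc 0 b) (⟨hx.trans hxy, hyb⟩ : y ∈ Set.Icc 0 b)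
    rwa [Real.norm_eq_abs, Real.norm_eq_abs, abs_of_nonneg (by linarith : 0 ≤ y - x)] at h
  have hpw : ∀ x, 0 < x → x ≤ b → b ^ (σ - 1) ≤ x ^ (σ - 1) := fun x hx hxb =>
    Real.rpow_le_rpow_of_nonpos hx hxb (by linarith)
  have hLC : 0 ≤ L * C₀ := by positivity
  refine ⟨fun x hx => ?_, fun x y hx hxy hyb => ?_⟩
  · rcases hx.1.eq_or_lt with rfl | hx0
    · rw [hq0, sub_self, abs_zero]; positivity
    · have h1 := hv0 x ⟨hx0, hx.2⟩
      have h2 := hlip 0 x le_rfl hx.1 hx.2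
      have h3 : L * C₀ * b ^ (σ - 1) * (x - 0) ≤ L * C₀ * x ^ σ := by
        have : x ^ σ = x ^ (σ - 1) * x := by
          rw [Real.rpow_sub_one hx0.ne', div_mul_cancel₀ _ hx0.ne']
        rw [this, sub_zero, mul_assoc (L * C₀)]
        have := hpw x hx0 hx.2
        gcongr
      rw [hq0] at h2
      have h4 : |v x - q.eval x| ≤ |v x - v 0| + |q.eval x - v 0| := by
        have := abs_sub (v x - v 0) (q.eval x - v 0)
        simpa using this
      have h5 : 0 ≤ C₁ * x ^ σ := by positivity
      nlinarith
  · have h1 := hv1 x y hx hxy hyb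
    have h2 := hlip x y hx.le hxy hyb
    have h3 : L * C₀ * b ^ (σ - 1) * (y - x) ≤ L * C₀ * x ^ (σ - 1) * (y - x) := by
      have : 0 ≤ y - x := by linarith
      have := hpw x hx (hxy.trans hyb)
      gcongr
    have h4 : |(v y - q.eval y) - (v x - q.eval x)| ≤ |v y - v x| + |q.eval y - q.eval x| := by
      have := abs_sub (v y - v x) (q.eval y - q.eval x)
      rwa [show v y - v x - (q.eval y - q.eval x) = (v y - q.eval y) - (v x - q.eval x) by ring]
        at this
    have h5 : 0 ≤ C₀ * x ^ (σ - 1) * (y - x) := by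
      have : 0 ≤ y - x := by linarith
      positivity
    nlinarith

/-- The increment of `x ↦ x ^ (-γ)` is controlled by the derivative at the left endpoint. -/
theorem abs_rpow_neg_sub_le {γ x h : ℝ} (hγ : 0 < γ) (hx : 0 < x) (hh : 0 ≤ h) :
    |(x + h) ^ (-γ) - x ^ (-γ)| ≤ γ * x ^ (-γ - 1) * h := by
  have key := Convex.norm_image_sub_le_of_norm_hasDerivWithin_le
    (f := fun y : ℝ => y ^ (-γ)) (f' := fun y => -γ * y ^ (-γ - 1)) (s := Set.Icc x (x + h))
    (C := γ * x ^ (-γ - 1)) (x := x) (y := x + h)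
    (fun y hy => (Real.hasDerivAt_rpow_const
      (Or.inl (by linarith [hy.1] : 0 < y).ne')).hasDerivWithinAt)
    (fun y hy => by
      have hy0 : 0 < y := hx.trans_le hy.1
      rw [Real.norm_eq_abs, abs_mul, abs_neg, abs_of_pos hγ,
        abs_of_pos (Real.rpow_pos_of_pos hy0 _)]
      have := Real.rpow_le_rpow_of_nonpos hx hy.1 (by linarith : -γ - 1 ≤ 0)
      gcongr)
    (convex_Icc _ _) ⟨le_rfl, by linarith⟩ ⟨by linarith, le_rfl⟩
  simpa [abs_of_nonneg hh] using key

/-- The part of the difference quotient coming from the history `[0, a]`. -/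
theorem abs_integral_history_le {γ c a t h H : ℝ} (hγ : 0 < γ) (hc : -1 < c) (ha : 0 ≤ a)
    (hat : a < t) (hh : 0 ≤ h) (hH : 0 ≤ H) {η : ℝ → ℝ}
    (hη : ∀ s ∈ Set.Ioc 0 a, |η s| ≤ H * s ^ c) :
    |∫ s in (0:ℝ)..a, ((t + h - s) ^ (-γ) - (t - s) ^ (-γ)) * η s|
      ≤ γ * (2 ^ |c| + 2 ^ |-γ - 1|) * (1 / (c + 1) + 1 / γ) * (H * t ^ c) * (t - a) ^ (-γ) * h := by
  have ht : 0 < t := by linarith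
  have hta : 0 < t - a := by linarith
  set A : ℝ := γ * h * H * (2 ^ |c| + 2 ^ |-γ - 1|) with hA
  have hA0 : 0 ≤ A := by positivity
  have hi1 : IntervalIntegrable (fun s : ℝ => s ^ c) MeasureTheory.volume 0 a :=
    intervalIntegral.intervalIntegrable_rpow' hc
  have hi2 : IntervalIntegrable (fun s : ℝ => (t - s) ^ (-γ - 1)) MeasureTheory.volume 0 a := by
    apply ContinuousOn.intervalIntegrable
    rw [Set.uIcc_of_le ha]
    intro s hs
    have : t - s ≠ 0 := by linarith [hs.2]
    exact ((continuousAt_const.sub continuousAt_id).rpow_const (Or.inl this)).continuousWithinAt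
  have hle := intervalIntegral.norm_integral_le_of_norm_le
    (f := fun s => ((t + h - s) ^ (-γ) - (t - s) ^ (-γ)) * η s)
    (g := fun s => A * (t ^ (-γ - 1) * s ^ c + t ^ c * (t - s) ^ (-γ - 1)))
    (μ := MeasureTheory.volume) ha
    (Filter.Eventually.of_forall fun s hs => by
      have hs0 : 0 < s := hs.1
      have hts : 0 < t - s := by linarith [hs.2]
      have h1 := abs_rpow_neg_sub_le hγ hts hh
      rw [show t - s + h = t + h - s by ring] at h1
      have h2 := rpow_mul_rpow_le_of_add hs0 hts (by ring : s + (t - s) = t) c (-γ - 1)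
      have h3 := hη s hs
      have h4 : 0 < (t - s) ^ (-γ - 1) := Real.rpow_pos_of_pos hts _
      rw [Real.norm_eq_abs, abs_mul]
      calc _ ≤ γ * (t - s) ^ (-γ - 1) * h * (H * s ^ c) := by gcongr
        _ = γ * h * H * (s ^ c * (t - s) ^ (-γ - 1)) := by ring
        _ ≤ γ * h * H * _ := mul_le_mul_of_nonneg_left h2 (by positivity)
        _ = _ := by rw [hA]; ring)
    (((hi1.const_mul _).add (hi2.const_mul _)).const_mul _)
  rw [Real.norm_eq_abs] at hle
  refine hle.trans ?_
  rw [intervalIntegral.integral_const_mul,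
    intervalIntegral.integral_add (hi1.const_mul _) (hi2.const_mul _),
    intervalIntegral.integral_const_mul, intervalIntegral.integral_const_mul,
    integral_rpow (Or.inl hc),
    intervalIntegral.integral_comp_sub_left (fun x : ℝ => x ^ (-γ - 1)) t,
    integral_rpow (Or.inr ⟨by linarith, by
      rw [Set.uIcc_of_le (by linarith), Set.mem_Icc]; intro hx; linarith [hx.1]⟩),
    Real.zero_rpow (by linarith), sub_zero, sub_zero, sub_add_cancel]
  have e1 : t ^ (-γ - 1) * (a ^ (c + 1) / (c + 1)) ≤ t ^ c * (t - a) ^ (-γ) * (1 / (c + 1)) := by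
    have h1 : a ^ (c + 1) ≤ t ^ (c + 1) := Real.rpow_le_rpow ha hat.le (by linarith)
    have h2 : t ^ (-γ - 1) * t ^ (c + 1) = t ^ c * t ^ (-γ) := by
      rw [← Real.rpow_add ht, ← Real.rpow_add ht]; congr 1; ring
    have h3 : t ^ (-γ) ≤ (t - a) ^ (-γ) :=
      Real.rpow_le_rpow_of_nonpos hta (by linarith) (by linarith)
    have hc1 : 0 < c + 1 := by linarith
    calc t ^ (-γ - 1) * (a ^ (c + 1) / (c + 1)) ≤ t ^ (-γ - 1) * (t ^ (c + 1) / (c + 1)) := by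
          gcongr
      _ = t ^ c * t ^ (-γ) * (1 / (c + 1)) := by rw [← h2]; ring
      _ ≤ _ := by gcongr
  have e2 : t ^ c * ((t ^ (-γ) - (t - a) ^ (-γ)) / (-γ)) ≤ t ^ c * (t - a) ^ (-γ) * (1 / γ) := by
    have h3 : 0 < t ^ (-γ) := Real.rpow_pos_of_pos ht _
    have h4 : (t ^ (-γ) - (t - a) ^ (-γ)) / (-γ) ≤ (t - a) ^ (-γ) * (1 / γ) := by
      rw [div_neg, ← neg_div, mul_one_div]
      gcongr
      linarith
    rw [mul_assoc]
    gcongr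
  calc _ ≤ A * (t ^ c * (t - a) ^ (-γ) * (1 / (c + 1)) + t ^ c * (t - a) ^ (-γ) * (1 / γ)) := by
        gcongr
    _ = _ := by rw [hA]; ring

/-- The part of the difference quotient coming from increments of the function on the current
interval. -/
theorem abs_integral_increment_le {γ σ ℓ W : ℝ} (hγ1 : γ < 1) (hσ0 : 0 < σ) (hℓ : 0 < ℓ)
    (hW : 0 ≤ W) {g : ℝ → ℝ} (hg : ∀ u, 0 < u → u < ℓ → |g u| ≤ W * (ℓ - u) ^ (σ - 1)) :
    |∫ u in (0:ℝ)..ℓ, u ^ (-γ) * g u|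
      ≤ (2 ^ |-γ| + 2 ^ |σ - 1|) * (1 / (1 - γ) + 1 / σ) * W * ℓ ^ (σ - γ) := by
  set A : ℝ := W * (2 ^ |-γ| + 2 ^ |σ - 1|) with hA
  have hi1 : IntervalIntegrable (fun s : ℝ => s ^ (-γ)) MeasureTheory.volume 0 ℓ :=
    intervalIntegral.intervalIntegrable_rpow' (by linarith)
  have hi2 : IntervalIntegrable (fun s : ℝ => (ℓ - s) ^ (σ - 1)) MeasureTheory.volume 0 ℓ := by
    have := (intervalIntegral.intervalIntegrable_rpow' (a := ℓ) (b := 0)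
      (by linarith : -1 < σ - 1)).comp_sub_left ℓ
    simpa using this
  have hne : ∀ᵐ u : ℝ, u ≠ ℓ := by
    simp [MeasureTheory.ae_iff]
  have hle := intervalIntegral.norm_integral_le_of_norm_le
    (f := fun u => u ^ (-γ) * g u)
    (g := fun u => A * (ℓ ^ (σ - 1) * u ^ (-γ) + ℓ ^ (-γ) * (ℓ - u) ^ (σ - 1)))
    (μ := MeasureTheory.volume) hℓ.le
    (by
      filter_upwards [hne] with u hu huI
      have hu0 : 0 < u := huI.1
      have hul : u < ℓ := lt_of_le_of_ne huI.2 hu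
      have hul' : 0 < ℓ - u := by linarith
      have h2 := rpow_mul_rpow_le_of_add hu0 hul' (by ring : u + (ℓ - u) = ℓ) (-γ) (σ - 1)
      have h3 := hg u hu0 hul
      rw [Real.norm_eq_abs, abs_mul, abs_of_pos (Real.rpow_pos_of_pos hu0 _)]
      calc _ ≤ u ^ (-γ) * (W * (ℓ - u) ^ (σ - 1)) := by gcongr
        _ = W * (u ^ (-γ) * (ℓ - u) ^ (σ - 1)) := by ring
        _ ≤ W * _ := mul_le_mul_of_nonneg_left h2 hW
        _ = _ := by rw [hA]; ring)
    (((hi1.const_mul _).add (hi2.const_mul _)).const_mul _)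
  rw [Real.norm_eq_abs] at hle
  refine hle.trans (le_of_eq ?_)
  rw [intervalIntegral.integral_const_mul,
    intervalIntegral.integral_add (hi1.const_mul _) (hi2.const_mul _),
    intervalIntegral.integral_const_mul, intervalIntegral.integral_const_mul,
    integral_rpow (Or.inl (by linarith)),
    intervalIntegral.integral_comp_sub_left (fun x : ℝ => x ^ (σ - 1)) ℓ,
    integral_rpow (Or.inl (by linarith)), sub_self, sub_zero,
    Real.zero_rpow (by linarith), Real.zero_rpow (by linarith), sub_zero, sub_zero,
    sub_add_cancel, mul_div_assoc', mul_div_assoc', ← Real.rpow_add hℓ, ← Real.rpow_add hℓ,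
    show σ - 1 + (-γ + 1) = σ - γ by ring, show -γ + σ = σ - γ by ring, hA,
    show -γ + 1 = 1 - γ by ring]
  ring

/-- Decomposition of the increment of a fractional integral into a history part, a part with
increments of the function, and a boundary part. -/
theorem fractional_integral_increment {γ a b t h : ℝ} (hγ1 : γ < 1) (ha : 0 ≤ a) (hat : a < t)
    (hh : 0 ≤ h) (htb : t + h ≤ b) {η : ℝ → ℝ} (hη : ContinuousOn η (Set.Icc 0 b)) :
    (∫ s in (0:ℝ)..(t + h), (t + h - s) ^ (-γ) * η s) - ∫ s in (0:ℝ)..t, (t - s) ^ (-γ) * η s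
      = (∫ s in (0:ℝ)..a, ((t + h - s) ^ (-γ) - (t - s) ^ (-γ)) * η s)
        + (∫ u in (0:ℝ)..(t - a), u ^ (-γ) * (η (t + h - u) - η (t - u)))
        + ∫ u in (t - a)..(t + h - a), u ^ (-γ) * η (t + h - u) := by
  have hker : ∀ d x y : ℝ,
      IntervalIntegrable (fun s : ℝ => (d - s) ^ (-γ)) MeasureTheory.volume x y := fun d x y => by
    have := (intervalIntegral.intervalIntegrable_rpow' (a := d - x) (b := d - y)
      (by linarith : -1 < -γ)).comp_sub_left d
    simpa using this
  have hInt : ∀ d x y : ℝ, 0 ≤ x → x ≤ y → y ≤ b →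
      IntervalIntegrable (fun s : ℝ => (d - s) ^ (-γ) * η s) MeasureTheory.volume x y :=
    fun d x y hx hxy hy => (hker d x y).mul_continuousOn
      (hη.mono (by rw [Set.uIcc_of_le hxy]; exact Set.Icc_subset_Icc hx hy))
  have hflip : ∀ d x y : ℝ, 0 ≤ d - y → x ≤ y → d - x ≤ b →
      IntervalIntegrable (fun u : ℝ => u ^ (-γ) * η (d - u)) MeasureTheory.volume x y := by
    intro d x y h1 h2 h3
    refine (intervalIntegral.intervalIntegrable_rpow' (by linarith : -1 < -γ)).mul_continuousOn
      (hη.comp (continuous_const.sub continuous_id).continuousOn ?_)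
    rw [Set.uIcc_of_le h2]
    intro u hu
    simp only [Set.mem_Icc]
    constructor <;> linarith [hu.1, hu.2]
  have hsub : ∀ d : ℝ, ∫ s in a..d, (d - s) ^ (-γ) * η s
      = ∫ u in (0:ℝ)..(d - a), u ^ (-γ) * η (d - u) := by
    intro d
    have := intervalIntegral.integral_comp_sub_left (a := a) (b := d)
      (fun u => u ^ (-γ) * η (d - u)) d
    simpa using this
  rw [← intervalIntegral.integral_add_adjacent_intervals
      (hInt (t + h) 0 a le_rfl ha (by linarith)) (hInt (t + h) a (t + h) ha (by linarith) htb),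
    ← intervalIntegral.integral_add_adjacent_intervals
      (hInt t 0 a le_rfl ha (by linarith)) (hInt t a t ha hat.le (by linarith)),
    hsub, hsub,
    ← intervalIntegral.integral_add_adjacent_intervals
      (hflip (t + h) 0 (t - a) (by linarith) (by linarith) (by linarith))
      (hflip (t + h) (t - a) (t + h - a) (by linarith) (by linarith) (by linarith))]
  have e1 : (∫ s in (0:ℝ)..a, ((t + h - s) ^ (-γ) - (t - s) ^ (-γ)) * η s)
      = (∫ s in (0:ℝ)..a, (t + h - s) ^ (-γ) * η s) - ∫ s in (0:ℝ)..a, (t - s) ^ (-γ) * η s := by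
    rw [← intervalIntegral.integral_sub (hInt (t + h) 0 a le_rfl ha (by linarith))
      (hInt t 0 a le_rfl ha (by linarith))]
    simp only [sub_mul]
  have e2 : (∫ u in (0:ℝ)..(t - a), u ^ (-γ) * (η (t + h - u) - η (t - u)))
      = (∫ u in (0:ℝ)..(t - a), u ^ (-γ) * η (t + h - u))
        - ∫ u in (0:ℝ)..(t - a), u ^ (-γ) * η (t - u) := by
    rw [← intervalIntegral.integral_sub
      (hflip (t + h) 0 (t - a) (by linarith) (by linarith) (by linarith))
      (hflip t 0 (t - a) (by linarith) (by linarith) (by linarith))]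
    simp only [mul_sub]
  rw [e1, e2]
  ring

/-- Pointwise bound for the Riemann–Liouville derivative on a mesh interval `(a, b)`. -/
theorem exists_abs_rl_deriv_le {γ σ c : ℝ} (hγ : 0 < γ) (hγ1 : γ < 1) (hσ0 : 0 < σ)
    (hc : -1 < c) :
    ∃ C : ℝ, 0 ≤ C ∧ ∀ (a b t H M D : ℝ) (η : ℝ → ℝ), 0 ≤ a → a < t → t < b → 0 ≤ H → 0 ≤ M →
      ContinuousOn η (Set.Icc 0 b) →
      (∀ s ∈ Set.Ioc 0 a, |η s| ≤ H * s ^ c) →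
      (∀ x ∈ Set.Icc a b, |η x| ≤ M) →
      (∀ x y, a < x → x ≤ y → y ≤ b →
        |η y - η x| ≤ M * (b - a) ^ (-σ) * (x - a) ^ (σ - 1) * (y - x)) →
      HasDerivAt (fun τ => ∫ s in (0:ℝ)..τ, rlKernel (1 - γ) (τ - s) * η s) D t →
      |D| ≤ C * (M + H * t ^ c) * (t - a) ^ (-γ) := by
  have hG : 0 < Real.Gamma (1 - γ) := Real.Gamma_pos_of_pos (by linarith)
  set A : ℝ := γ * (2 ^ |c| + 2 ^ |-γ - 1|) * (1 / (c + 1) + 1 / γ) with hA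
  set B : ℝ := (2 ^ |-γ| + 2 ^ |σ - 1|) * (1 / (1 - γ) + 1 / σ) with hB
  have hA0 : 0 ≤ A := by
    have : 0 < c + 1 := by linarith
    positivity
  have hB0 : 0 ≤ B := by
    have : 0 < 1 - γ := by linarith
    positivity
  refine ⟨(A + B + 1) / Real.Gamma (1 - γ), by positivity, ?_⟩
  intro a b t H M D η ha hat htb hH hM hη hhist hloc hinc hD
  have ht : 0 < t := by linarith
  have hℓ : 0 < t - a := by linarith
  have hℓγ : 0 < (t - a) ^ (-γ) := Real.rpow_pos_of_pos hℓ _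
  have htc : 0 < t ^ c := Real.rpow_pos_of_pos ht _
  have hF : (fun τ => ∫ s in (0:ℝ)..τ, rlKernel (1 - γ) (τ - s) * η s)
      = fun τ => (∫ s in (0:ℝ)..τ, (τ - s) ^ (-γ) * η s) / Real.Gamma (1 - γ) := by
    funext τ
    rw [← intervalIntegral.integral_div]
    refine intervalIntegral.integral_congr fun s _ => ?_
    simp only [rlKernel, show 1 - γ - 1 = -γ by ring]
    ring
  rw [hF] at hD
  have hslope := (hasDerivWithinAt_iff_tendsto_slope' (Set.self_notMem_Ioi)).mp
    (hD.hasDerivWithinAt (s := Set.Ioi t))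
  refine le_of_tendsto hslope.abs ?_
  filter_upwards [Ioo_mem_nhdsGT htb] with y hy
  obtain ⟨h, rfl⟩ : ∃ h, y = t + h := ⟨y - t, by ring⟩
  have hh : 0 < h := by linarith [hy.1]
  have j1 := abs_integral_history_le hγ hc ha hat hh.le hH hhist
  have j2 := abs_integral_increment_le (γ := γ) (g := fun u => η (t + h - u) - η (t - u)) hγ1 hσ0 hℓ
    (W := M * (b - a) ^ (-σ) * h)
    (by have : 0 < b - a := by linarith
        positivity)
    (fun u hu0 hu => by
      have := hinc (t - u) (t + h - u) (by linarith) (by linarith) (by linarith [hy.2])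
      rw [show t - u - a = t - a - u by ring, show t + h - u - (t - u) = h by ring] at this
      linarith)
  have j3 := intervalIntegral.norm_integral_le_of_norm_le_const (a := t - a) (b := t + h - a)
    (f := fun u => u ^ (-γ) * η (t + h - u)) (C := (t - a) ^ (-γ) * M)
    (fun u hu => by
      rw [Set.uIoc_of_le (by linarith)] at hu
      have hu0 : 0 < u := hℓ.trans hu.1
      rw [Real.norm_eq_abs, abs_mul, abs_of_pos (Real.rpow_pos_of_pos hu0 _)]
      have h1 := Real.rpow_le_rpow_of_nonpos hℓ hu.1.le (by linarith : -γ ≤ 0)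
      have h2 := hloc (t + h - u) ⟨by linarith [hu.2], by linarith [hu.1, hy.2]⟩
      gcongr)
  rw [Real.norm_eq_abs, show t + h - a - (t - a) = h by ring, abs_of_pos hh] at j3
  have e2 : M * (b - a) ^ (-σ) * h * (t - a) ^ (σ - γ) ≤ M * (t - a) ^ (-γ) * h := by
    have h1 : (b - a) ^ (-σ) ≤ (t - a) ^ (-σ) :=
      Real.rpow_le_rpow_of_nonpos hℓ (by linarith) (by linarith)
    have h2 : (t - a) ^ (-σ) * (t - a) ^ (σ - γ) = (t - a) ^ (-γ) := by
      rw [← Real.rpow_add hℓ]; congr 1; ring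
    calc _ ≤ M * (t - a) ^ (-σ) * h * (t - a) ^ (σ - γ) := by gcongr
      _ = _ := by rw [← h2]; ring
  rw [slope_def_field, ← sub_div, show t + h - t = h by ring,
    fractional_integral_increment hγ1 ha hat hh.le hy.2.le hη, abs_div, abs_div, abs_of_pos hG,
    abs_of_pos hh, div_div, div_le_iff₀ (by positivity)]
  have hsum := (abs_add_three (∫ s in (0:ℝ)..a, ((t + h - s) ^ (-γ) - (t - s) ^ (-γ)) * η s)
    (∫ u in (0:ℝ)..(t - a), u ^ (-γ) * (η (t + h - u) - η (t - u)))
    (∫ u in (t - a)..(t + h - a), u ^ (-γ) * η (t + h - u)))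
  refine hsum.trans ?_
  have e3 := mul_le_mul_of_nonneg_left e2 hB0
  have e4 : (A + B + 1) / Real.Gamma (1 - γ) * (M + H * t ^ c) * (t - a) ^ (-γ)
      * (Real.Gamma (1 - γ) * h) = (A + B + 1) * (M + H * t ^ c) * (t - a) ^ (-γ) * h := by
    field_simp
  rw [e4]
  have p1 : 0 ≤ A * M * (t - a) ^ (-γ) * h := by positivity
  have p2 : 0 ≤ (B + 1) * (H * t ^ c) * (t - a) ^ (-γ) * h := by positivity
  linarith

theorem gradedMesh_eq {T r : ℝ} {N : ℕ} (n : ℕ) :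
    gradedMesh T r N n = T / (N : ℝ) ^ r * (n : ℝ) ^ r := by
  rw [gradedMesh, Real.div_rpow (Nat.cast_nonneg n) (Nat.cast_nonneg N)]
  ring

theorem gradedMesh_zero {T r : ℝ} {N : ℕ} (hr : 1 ≤ r) : gradedMesh T r N 0 = 0 := by
  rw [gradedMesh_eq, Nat.cast_zero, Real.zero_rpow (by linarith), mul_zero]

theorem gradedMesh_strictMono {T r : ℝ} {N : ℕ} (hT : 0 < T) (hr : 1 ≤ r) (hN : 1 ≤ N) :
    StrictMono (gradedMesh T r N) := by
  have hN0 : (0:ℝ) < N := by exact_mod_cast hN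
  intro i j hij
  rw [gradedMesh_eq, gradedMesh_eq]
  have : (i : ℝ) ^ r < (j : ℝ) ^ r :=
    Real.rpow_lt_rpow (Nat.cast_nonneg i) (by exact_mod_cast hij) (by linarith)
  have h2 : 0 < T / (N : ℝ) ^ r := by positivity
  gcongr

theorem gradedMesh_self {T r : ℝ} {N : ℕ} (hN : 1 ≤ N) : gradedMesh T r N N = T := by
  have hN0 : (N : ℝ) ≠ 0 := by positivity
  rw [gradedMesh, div_self hN0, Real.one_rpow, one_mul]

theorem gradedMesh_one {T r : ℝ} {N : ℕ} : gradedMesh T r N 1 = T / (N : ℝ) ^ r := by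
  rw [gradedMesh_eq, Nat.cast_one, Real.one_rpow, mul_one]

/-- Every point of `(0, t_k]` lies in one of the first `k` mesh intervals. -/
theorem exists_mem_Ioc_of_mem_Ioc {x : ℕ → ℝ} (hx0 : x 0 = 0) {s : ℝ} (k : ℕ)
    (hs : s ∈ Set.Ioc 0 (x k)) : ∃ j < k, s ∈ Set.Ioc (x j) (x (j + 1)) := by
  induction k with
  | zero => rw [hx0] at hs; exact absurd hs (by simp)
  | succ k ih =>
    rcases le_or_gt s (x k) with h | h
    · obtain ⟨j, hj, hj'⟩ := ih ⟨hs.1, h⟩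
      exact ⟨j, by omega, hj'⟩
    · exact ⟨k, by omega, h, hs.2⟩

theorem add_one_rpow_sub_rpow_le {r : ℝ} (hr : 1 ≤ r) (k : ℕ) :
    ((k : ℝ) + 1) ^ r - (k : ℝ) ^ r ≤ r * ((k : ℝ) + 1) ^ (r - 1) := by
  have hk : (0:ℝ) < (k : ℝ) + 1 := by positivity
  have h1 : (-1 : ℝ) ≤ -(1 / ((k : ℝ) + 1)) := by
    rw [neg_le_neg_iff, div_le_one hk]; linarith [Nat.cast_nonneg (α := ℝ) k]
  have h := one_add_mul_self_le_rpow_one_add h1 hr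
  have h2 : (1 + -(1 / ((k : ℝ) + 1))) = (k : ℝ) / ((k : ℝ) + 1) := by field_simp; ring
  rw [h2, Real.div_rpow (Nat.cast_nonneg k) hk.le, le_div_iff₀ (Real.rpow_pos_of_pos hk _)] at h
  rw [Real.rpow_sub_one hk.ne']
  have e : (1 + r * -(1 / ((k : ℝ) + 1))) * ((k : ℝ) + 1) ^ r
      = ((k : ℝ) + 1) ^ r - r * (((k : ℝ) + 1) ^ r / ((k : ℝ) + 1)) := by ring
  linarith

theorem add_one_rpow_le {r : ℝ} (hr : 0 ≤ r) {k : ℕ} (hk : 1 ≤ k) :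
    ((k : ℝ) + 1) ^ r ≤ 2 ^ r * (k : ℝ) ^ r := by
  have hk1 : (1:ℝ) ≤ k := by exact_mod_cast hk
  rw [← Real.mul_rpow (by norm_num) (by positivity)]
  exact Real.rpow_le_rpow (by positivity) (by linarith) hr

/-- Local interpolation error factor on a graded mesh interval away from the origin. -/
theorem graded_step_pow_le {δ r σ m : ℝ} {p k : ℕ} (hδ : 0 < δ) (hr : 1 ≤ r) (hσ0 : 0 < σ)
    (hm : r * m ≤ p + 1) (hk : 1 ≤ k) :
    (δ * (k : ℝ) ^ r) ^ (σ - (p + 1)) * (δ * ((k : ℝ) + 1) ^ r - δ * (k : ℝ) ^ r) ^ (p + 1)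
      ≤ (r * 2 ^ r) ^ (p + 1) * (δ ^ σ * ((k : ℝ) + 1) ^ (r * (σ - m))) := by
  have hk0 : (0:ℝ) < k := by exact_mod_cast hk
  have hk1 : (0:ℝ) < (k : ℝ) + 1 := by positivity
  have hk2 : (1:ℝ) ≤ (k : ℝ) + 1 := by linarith
  set a := δ * (k : ℝ) ^ r with ha
  have ha0 : 0 < a := by positivity
  set w := δ * ((k : ℝ) + 1) ^ r - a with hw
  have hmono : (k : ℝ) ^ r ≤ ((k : ℝ) + 1) ^ r :=
    Real.rpow_le_rpow hk0.le (by linarith) (by linarith)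
  have hw0 : 0 ≤ w := by rw [hw, ha, ← mul_sub]; exact mul_nonneg hδ.le (by linarith)
  have hquot : w / a ≤ r * 2 ^ r / ((k : ℝ) + 1) := by
    rw [div_le_div_iff₀ ha0 hk1]
    have h1 := add_one_rpow_sub_rpow_le hr k
    have h2 := add_one_rpow_le (by linarith : 0 ≤ r) hk
    have h3 : ((k : ℝ) + 1) ^ (r - 1) * ((k : ℝ) + 1) = ((k : ℝ) + 1) ^ r := by
      rw [Real.rpow_sub_one hk1.ne', div_mul_cancel₀ _ hk1.ne']
    calc w * ((k : ℝ) + 1) = δ * (((k : ℝ) + 1) ^ r - (k : ℝ) ^ r) * ((k : ℝ) + 1) := by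
          rw [hw, ha]; ring
      _ ≤ δ * (r * ((k : ℝ) + 1) ^ (r - 1)) * ((k : ℝ) + 1) := by gcongr
      _ = δ * r * ((k : ℝ) + 1) ^ r := by rw [← h3]; ring
      _ ≤ δ * r * (2 ^ r * (k : ℝ) ^ r) := by gcongr
      _ = r * 2 ^ r * a := by rw [ha]; ring
  have e1 : a ^ (σ - (p + 1)) * w ^ (p + 1) = a ^ σ * (w / a) ^ (p + 1) := by
    rw [Real.rpow_sub ha0, div_pow, show ((p : ℝ) + 1) = ((p + 1 : ℕ) : ℝ) by push_cast; ring,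
      Real.rpow_natCast]
    ring
  have e2 : a ^ σ ≤ δ ^ σ * ((k : ℝ) + 1) ^ (r * σ) := by
    rw [Real.rpow_mul hk1.le, ← Real.mul_rpow hδ.le (by positivity)]
    refine Real.rpow_le_rpow ha0.le ?_ hσ0.le
    rw [ha]; gcongr
  have e3 : (w / a) ^ (p + 1) ≤ (r * 2 ^ r) ^ (p + 1) * ((k : ℝ) + 1) ^ (-(r * m)) := by
    have h1 : (w / a) ^ (p + 1) ≤ (r * 2 ^ r / ((k : ℝ) + 1)) ^ (p + 1) := by gcongr
    refine h1.trans ?_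
    rw [div_pow, div_eq_mul_inv]
    have h2 : (((k : ℝ) + 1) ^ (p + 1))⁻¹ ≤ ((k : ℝ) + 1) ^ (-(r * m)) := by
      rw [← Real.rpow_natCast, ← Real.rpow_neg hk1.le]
      refine Real.rpow_le_rpow_of_exponent_le hk2 ?_
      push_cast; linarith
    have hr0 : 0 < r := by linarith
    gcongr
  rw [e1]
  calc _ ≤ (δ ^ σ * ((k : ℝ) + 1) ^ (r * σ))
        * ((r * 2 ^ r) ^ (p + 1) * ((k : ℝ) + 1) ^ (-(r * m))) := by gcongr
    _ = (r * 2 ^ r) ^ (p + 1)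
        * (δ ^ σ * (((k : ℝ) + 1) ^ (r * σ) * ((k : ℝ) + 1) ^ (-(r * m)))) := by ring
    _ = _ := by rw [← Real.rpow_add hk1]; congr 3; ring

theorem one_add_rpow_le {T x z d : ℝ} (hx : 0 < x) (hxz : x ≤ z) (hzT : z ≤ T) (hd : d ≤ 0) :
    1 + z ^ d ≤ (1 + T ^ (-d)) * x ^ d := by
  have hT : 0 < T := by linarith
  have h1 : z ^ d ≤ x ^ d := Real.rpow_le_rpow_of_nonpos hx hxz hd
  have h2 : T ^ d ≤ x ^ d := Real.rpow_le_rpow_of_nonpos hx (hxz.trans hzT) hd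
  have h3 : T ^ (-d) * T ^ d = 1 := by rw [← Real.rpow_add hT]; simp
  have h4 : T ^ (-d) * T ^ d ≤ T ^ (-d) * x ^ d := by gcongr
  linarith

/-- Increments of a function whose first derivative has a weak singularity at the origin. -/
theorem abs_sub_le_of_iteratedDerivWithin {T C₀ σ : ℝ} {p : ℕ} (hC₀ : 0 ≤ C₀) (hσ1 : σ < 1)
    {v : ℝ → ℝ} (hv : ContDiffOn ℝ (p + 1) v (Set.Ioc 0 T))
    (hvd : ∀ t ∈ Set.Ioc (0 : ℝ) T,
      |iteratedDerivWithin 1 v (Set.Ioc 0 T) t| ≤ C₀ * (1 + t ^ (σ - 1)))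
    {x y : ℝ} (hx : 0 < x) (hxy : x ≤ y) (hyT : y ≤ T) :
    |v y - v x| ≤ C₀ * (1 + T ^ (1 - σ)) * x ^ (σ - 1) * (y - x) := by
  have hsub : Set.Icc x y ⊆ Set.Ioc 0 T := fun z hz => ⟨hx.trans_le hz.1, hz.2.trans hyT⟩
  have h := Convex.norm_image_sub_le_of_norm_hasDerivWithin_le (f := v)
    (f' := iteratedDerivWithin 1 v (Set.Ioc 0 T)) (s := Set.Icc x y)
    (C := C₀ * (1 + T ^ (1 - σ)) * x ^ (σ - 1)) (x := x) (y := y)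
    (fun z hz => by
      rw [iteratedDerivWithin_one]
      exact ((hv.differentiableOn (by simp)) z (hsub hz)).hasDerivWithinAt.mono hsub)
    (fun z hz => by
      have h1 := one_add_rpow_le hx hz.1 (hz.2.trans hyT) (by linarith : σ - 1 ≤ 0)
      rw [neg_sub] at h1
      rw [Real.norm_eq_abs, mul_assoc]
      exact (hvd z (hsub hz)).trans (mul_le_mul_of_nonneg_left h1 hC₀))
    (convex_Icc x y) ⟨le_rfl, hxy⟩ ⟨hxy, le_rfl⟩
  rwa [Real.norm_eq_abs, Real.norm_eq_abs, abs_of_nonneg (by linarith : 0 ≤ y - x)] at h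

/-- Bounds for the interpolation error on the graded mesh: on the `k`-th interval the error has size
`δ ^ σ * (k + 1) ^ (r * (σ - m))` with `δ = t_1`, its increments scale accordingly, and globally it
is bounded by `δ ^ m * s ^ (σ - m)`. -/
theorem exists_graded_interp_error_le {T r σ C₀ m : ℝ} {p : ℕ} (hT : 0 < T) (hr : 1 ≤ r)
    (hp : 1 ≤ p) (hσ0 : 0 < σ) (hσ1 : σ < 1) (hC₀ : 0 < C₀) (hm0 : 0 < m)
    (hm : r * m ≤ p + 1) :
    ∃ E : ℝ, 0 ≤ E ∧ ∀ N : ℕ, 1 ≤ N → ∀ v : ℝ → ℝ,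
      ContDiffOn ℝ (p + 1) v (Set.Ioc 0 T) →
      (∀ t ∈ Set.Ioc (0 : ℝ) T, |v t - v 0| ≤ C₀ * t ^ σ) →
      (∀ t ∈ Set.Ioc (0 : ℝ) T, ∀ ℓ ≤ p + 1,
        |iteratedDerivWithin ℓ v (Set.Ioc 0 T) t| ≤ C₀ * (1 + t ^ (σ - (ℓ : ℝ)))) →
      ∀ k < N, ∀ q : Polynomial ℝ, q.degree ≤ p →
        (∀ j ≤ p, q.eval (gradedMesh T r N k +
            (j : ℝ) * (gradedMesh T r N (k + 1) - gradedMesh T r N k) / (p : ℝ))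
          = v (gradedMesh T r N k +
            (j : ℝ) * (gradedMesh T r N (k + 1) - gradedMesh T r N k) / (p : ℝ))) →
        (∀ x ∈ Set.Icc (gradedMesh T r N k) (gradedMesh T r N (k + 1)),
          |v x - q.eval x| ≤ E * ((T / (N : ℝ) ^ r) ^ σ * ((k : ℝ) + 1) ^ (r * (σ - m)))) ∧
        (∀ x y, gradedMesh T r N k < x → x ≤ y → y ≤ gradedMesh T r N (k + 1) →
          |(v y - q.eval y) - (v x - q.eval x)|
            ≤ E * ((T / (N : ℝ) ^ r) ^ σ * ((k : ℝ) + 1) ^ (r * (σ - m)))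
              * (gradedMesh T r N (k + 1) - gradedMesh T r N k) ^ (-σ)
              * (x - gradedMesh T r N k) ^ (σ - 1) * (y - x)) ∧
        (∀ s ∈ Set.Ioc (gradedMesh T r N k) (gradedMesh T r N (k + 1)),
          |v s - q.eval s| ≤ E * (T / (N : ℝ) ^ r) ^ m * s ^ (σ - m)) := by
  set C₁ : ℝ := C₀ * (1 + T ^ (1 - σ)) with hC₁
  have hC₁0 : 0 ≤ C₁ := by positivity
  obtain ⟨S, hS0, hS⟩ := exists_interp_error_of_singular hp hσ0 hσ1 hC₀.le hC₁0
  set C₂ : ℝ := C₀ * (1 + T ^ (-(σ - ((p : ℝ) + 1)))) with hC₂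
  have hC₂0 : 0 ≤ C₂ := by positivity
  set R : ℝ := (2 ^ r) ^ |σ - m| with hR
  have h2r : (1:ℝ) ≤ 2 ^ r := Real.one_le_rpow one_le_two (by linarith)
  have hR1 : 1 ≤ R := Real.one_le_rpow h2r (abs_nonneg _)
  have hr0 : 0 < r := by linarith
  set Q : ℝ := C₂ * (r * 2 ^ r) ^ (p + 1) with hQ
  have hQ0 : 0 ≤ Q := by positivity
  have hQR : Q ≤ Q * R := le_mul_of_one_le_right hQ0 hR1
  refine ⟨S + Q * R, by positivity, fun N hN v hv hv0 hvd k hk q hq hnode => ?_⟩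
  have hN0 : (0:ℝ) < N := by exact_mod_cast hN
  set δ : ℝ := T / (N : ℝ) ^ r with hδ
  have hδ0 : 0 < δ := by positivity
  have hmono := gradedMesh_strictMono hT hr hN
  have hbT : gradedMesh T r N (k + 1) ≤ T :=
    (hmono.monotone (by omega : k + 1 ≤ N)).trans_eq (gradedMesh_self hN)
  have hab : gradedMesh T r N k < gradedMesh T r N (k + 1) := hmono (Nat.lt_succ_self k)
  have hb : gradedMesh T r N (k + 1) = δ * ((k : ℝ) + 1) ^ r := by
    rw [gradedMesh_eq]; push_cast; rfl
  rcases Nat.eq_zero_or_pos k with rfl | hk1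
  · have ha : gradedMesh T r N 0 = 0 := gradedMesh_zero hr
    have hb1 : gradedMesh T r N (0 + 1) = δ := by rw [zero_add, gradedMesh_one]
    rw [hb1] at hbT
    simp only [ha, hb1, zero_add, sub_zero, Nat.cast_zero, Real.one_rpow, mul_one] at hnode ⊢
    obtain ⟨g1, g2⟩ := hS δ hδ0 v q
      (fun t ht => hv0 t ⟨ht.1, ht.2.trans hbT⟩)
      (fun x y hx hxy hy => abs_sub_le_of_iteratedDerivWithin hC₀.le hσ1 hv
        (fun t ht => by simpa using hvd t ht 1 (by omega)) hx hxy (hy.trans hbT)) hq hnode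
    have hSE : S ≤ S + Q * R := le_add_of_nonneg_right (by positivity)
    refine ⟨fun x hx => ?_, fun x y hx hxy hy => ?_, fun s hs => ?_⟩
    · refine (g1 x hx).trans ?_
      have := Real.rpow_le_rpow hx.1 hx.2 hσ0.le
      have := Real.rpow_nonneg hx.1 σ
      gcongr
    · refine (g2 x y hx hxy hy).trans ?_
      have h1 : δ ^ σ * δ ^ (-σ) = 1 := by rw [← Real.rpow_add hδ0]; simp
      have h2 : 0 ≤ y - x := by linarith
      rw [mul_assoc (S + Q * R), h1, mul_one]
      gcongr
    · have hs0 : 0 < s := hs.1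
      refine (g1 s ⟨hs0.le, hs.2⟩).trans ?_
      have h1 : s ^ σ = s ^ m * s ^ (σ - m) := by rw [← Real.rpow_add hs0]; congr 1; ring
      have h2 : s ^ m ≤ δ ^ m := Real.rpow_le_rpow hs0.le hs.2 hm0.le
      rw [h1, mul_assoc]
      gcongr
  · have ha : gradedMesh T r N k = δ * (k : ℝ) ^ r := gradedMesh_eq k
    have hk0 : (0:ℝ) < k := by exact_mod_cast hk1
    have ha0 : 0 < gradedMesh T r N k := by rw [ha]; positivity
    set K : ℝ := C₂ * gradedMesh T r N k ^ (σ - ((p : ℝ) + 1)) with hK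
    have hK0 : 0 ≤ K := by positivity
    obtain ⟨g1, g2⟩ := interp_error_of_smooth hp ha0 hab hbT hK0 hv
      (fun y hy => by
        have h1 := hvd y ⟨ha0.trans_le hy.1, hy.2.trans hbT⟩ (p + 1) le_rfl
        have hpp : σ - ((p : ℝ) + 1) ≤ 0 := by linarith [Nat.cast_nonneg (α := ℝ) p]
        have h2 := one_add_rpow_le ha0 hy.1 (hy.2.trans hbT) hpp
        push_cast at h1
        refine h1.trans ?_
        rw [hK, hC₂, mul_assoc]
        gcongr) hq hnode
    have hstep : K * (gradedMesh T r N (k + 1) - gradedMesh T r N k) ^ (p + 1)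
        ≤ Q * (δ ^ σ * ((k : ℝ) + 1) ^ (r * (σ - m))) := by
      have h1 := graded_step_pow_le (p := p) hδ0 hr hσ0 hm hk1
      rw [hK, hb, ha, hQ, mul_assoc C₂, mul_assoc C₂]
      exact mul_le_mul_of_nonneg_left h1 hC₂0
    have hw : 0 < gradedMesh T r N (k + 1) - gradedMesh T r N k := by linarith
    set w := gradedMesh T r N (k + 1) - gradedMesh T r N k
    have hstep' : K * w ^ (p + 1)
        ≤ (S + Q * R) * (δ ^ σ * ((k : ℝ) + 1) ^ (r * (σ - m))) := by
      refine hstep.trans ?_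
      gcongr
      linarith
    refine ⟨fun x hx => (g1 x hx).trans hstep', fun x y hx hxy hy => ?_, fun s hs => ?_⟩
    · have h1 := g2 x ⟨hx.le, hxy.trans hy⟩ y ⟨hx.le.trans hxy, hy⟩
      have h0 : 0 ≤ y - x := by linarith
      rw [abs_of_nonneg h0] at h1
      refine h1.trans (mul_le_mul_of_nonneg_right ?_ h0)
      have h2 : w ^ (-σ) * w ^ (σ - 1) = w⁻¹ := by
        rw [← Real.rpow_add hw, ← Real.rpow_neg_one]; congr 1; ring
      have h3 : w ^ (σ - 1) ≤ (x - gradedMesh T r N k) ^ (σ - 1) :=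
        Real.rpow_le_rpow_of_nonpos (by linarith) (by simp only [w]; linarith) (by linarith)
      have h4 : K * w ^ p = K * w ^ (p + 1) * (w ^ (-σ) * w ^ (σ - 1)) := by
        rw [h2, pow_succ]; field_simp
      rw [h4, ← mul_assoc]
      gcongr
    · have hs0 : 0 < s := ha0.trans hs.1
      refine (g1 s ⟨hs.1.le, hs.2⟩).trans (hstep.trans ?_)
      have hb0 : 0 < gradedMesh T r N (k + 1) := ha0.trans hab
      have h1 : gradedMesh T r N (k + 1) ≤ 2 ^ r * s := by
        have := add_one_rpow_le hr0.le hk1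
        calc gradedMesh T r N (k + 1) ≤ δ * (2 ^ r * (k : ℝ) ^ r) := by rw [hb]; gcongr
          _ = 2 ^ r * gradedMesh T r N k := by rw [ha]; ring
          _ ≤ 2 ^ r * s := by gcongr; exact hs.1.le
      have h2 : s ≤ 2 ^ r * gradedMesh T r N (k + 1) := hs.2.trans (by nlinarith)
      have h3 := rpow_le_of_comparable hb0 hs0 h2r h1 h2 (σ - m)
      have h4 : δ ^ σ * ((k : ℝ) + 1) ^ (r * (σ - m))
          = δ ^ m * gradedMesh T r N (k + 1) ^ (σ - m) := by
        rw [hb, Real.mul_rpow hδ0.le (by positivity), Real.rpow_mul (by positivity), ← mul_assoc,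
          ← Real.rpow_add hδ0]
        congr 2; ring
      rw [h4]
      calc Q * (δ ^ m * gradedMesh T r N (k + 1) ^ (σ - m))
          ≤ Q * (δ ^ m * (R * s ^ (σ - m))) := by gcongr
        _ = Q * R * δ ^ m * s ^ (σ - m) := by ring
        _ ≤ _ := by gcongr; linarith

/-- Gluing: a function continuous on each mesh interval is continuous on their union. -/
theorem continuousOn_Icc_of_mesh {x : ℕ → ℝ} (hx : Monotone x) {f : ℝ → ℝ} (n : ℕ)
    (hf : ∀ k < n, ContinuousOn f (Set.Icc (x k) (x (k + 1)))) :
    ContinuousOn f (Set.Icc (x 0) (x n)) := by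
  induction n with
  | zero => simp
  | succ n ih =>
    rw [← Set.Icc_union_Icc_eq_Icc (hx (Nat.zero_le n)) (hx (Nat.le_succ n))]
    exact (ih fun k hk => hf k (by omega)).union_of_isClosed (hf n (by omega)) isClosed_Icc
      isClosed_Icc

/-- Integral bound on one mesh interval from a pointwise bound with an endpoint singularity. -/
theorem integral_sq_le_of_abs_le {α a b A : ℝ} (hα1 : α < 1) (hab : a ≤ b)
    {D : ℝ → ℝ} (hDi : IntervalIntegrable (fun t => D t ^ 2) MeasureTheory.volume a b)
    (hD : ∀ t ∈ Set.Ioo a b, |D t| ≤ A * (t - a) ^ (-(α / 2))) :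
    ∫ t in a..b, D t ^ 2 ≤ A ^ 2 * ((b - a) ^ (1 - α) / (1 - α)) := by
  have hi : IntervalIntegrable (fun t : ℝ => (t - a) ^ (-α)) MeasureTheory.volume a b := by
    have := (intervalIntegral.intervalIntegrable_rpow' (a := 0) (b := b - a)
      (by linarith : -1 < -α)).comp_sub_right a
    simpa using this
  refine (intervalIntegral.integral_mono_on_of_le_Ioo hab hDi (hi.const_mul (A ^ 2))
    fun t ht => ?_).trans_eq ?_
  · have hta : 0 < t - a := by linarith [ht.1]
    have h1 := pow_le_pow_left₀ (abs_nonneg _) (hD t ht) 2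
    rw [sq_abs, mul_pow, ← Real.rpow_mul_natCast hta.le] at h1
    rwa [show -(α / 2) * ((2 : ℕ) : ℝ) = -α by push_cast; ring] at h1
  · rw [intervalIntegral.integral_const_mul,
      intervalIntegral.integral_comp_sub_right (fun t : ℝ => t ^ (-α)) a,
      integral_rpow (Or.inl (by linarith)), sub_self, Real.zero_rpow (by linarith), sub_zero,
      show -α + 1 = 1 - α by ring]

/-- Contribution of one graded mesh interval, expressed through the index of the interval. -/
theorem graded_interval_weight_le {α r σ m δ G w : ℝ} (hα1 : α < 1) (hr0 : 0 < r) (hδ0 : 0 < δ)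
    (k : ℕ) (hw0 : 0 ≤ w) (hw : w ≤ r * (δ * ((k : ℝ) + 1) ^ (r - 1))) :
    (G * (δ ^ σ * ((k : ℝ) + 1) ^ (r * (σ - m)))) ^ 2 * (w ^ (1 - α) / (1 - α))
      ≤ G ^ 2 * (r ^ (1 - α) / (1 - α)) * (δ ^ (1 + 2 * σ - α)
        * ((k : ℝ) + 1) ^ (r * (1 + 2 * σ - α) - (2 * (r * m) - α) - 1)) := by
  have hk1 : (0:ℝ) < (k : ℝ) + 1 := by positivity
  have h1α : 0 < 1 - α := by linarith
  have hpow := Real.rpow_le_rpow hw0 hw h1α.le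
  rw [Real.mul_rpow hr0.le (by positivity), Real.mul_rpow hδ0.le (by positivity),
    ← Real.rpow_mul hk1.le] at hpow
  calc _ ≤ (G * (δ ^ σ * ((k : ℝ) + 1) ^ (r * (σ - m)))) ^ 2
        * (r ^ (1 - α) * (δ ^ (1 - α) * ((k : ℝ) + 1) ^ ((r - 1) * (1 - α))) / (1 - α)) := by
        gcongr
    _ = G ^ 2 * (r ^ (1 - α) / (1 - α)) * ((δ ^ σ * δ ^ σ * δ ^ (1 - α))
        * (((k : ℝ) + 1) ^ (r * (σ - m)) * ((k : ℝ) + 1) ^ (r * (σ - m))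
          * ((k : ℝ) + 1) ^ ((r - 1) * (1 - α)))) := by ring
    _ = _ := by
        rw [← Real.rpow_add hδ0, ← Real.rpow_add hδ0, ← Real.rpow_add hk1, ← Real.rpow_add hk1]
        congr 3 <;> ring

/-- The squared `L²` norm of the Riemann–Liouville derivative of the interpolation error is bounded
by a sum over the mesh intervals, for every admissible decay exponent `m`. -/
theorem exists_integral_sq_le_sum {T α r σ C₀ m : ℝ} {p : ℕ} (hT : 0 < T) (hα0 : 0 < α)
    (hα1 : α < 1) (hr : 1 ≤ r) (hp : 1 ≤ p) (hσ0 : 0 < σ) (hσ1 : σ < 1) (hC₀ : 0 < C₀)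
    (hm0 : 0 < m) (hm : r * m ≤ p + 1) (hm1 : m < σ + 1) :
    ∃ C : ℝ, 0 ≤ C ∧
      ∀ (N : ℕ), 1 ≤ N → ∀ v Pv : ℝ → ℝ,
        ContinuousOn v (Set.Icc 0 T) →
        ContDiffOn ℝ (p + 1) v (Set.Ioc 0 T) →
        (∀ t ∈ Set.Ioc (0 : ℝ) T, |v t - v 0| ≤ C₀ * t ^ σ) →
        (∀ t ∈ Set.Ioc (0 : ℝ) T, ∀ ℓ ≤ p + 1,
          |iteratedDerivWithin ℓ v (Set.Ioc 0 T) t| ≤ C₀ * (1 + t ^ (σ - (ℓ : ℝ)))) →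
        (∀ k < N, ∃ q : Polynomial ℝ, q.degree ≤ p ∧
          (∀ s ∈ Set.Icc (gradedMesh T r N k) (gradedMesh T r N (k + 1)), Pv s = q.eval s) ∧
          (∀ j ≤ p, q.eval (gradedMesh T r N k +
              (j : ℝ) * (gradedMesh T r N (k + 1) - gradedMesh T r N k) / (p : ℝ))
            = v (gradedMesh T r N k +
              (j : ℝ) * (gradedMesh T r N (k + 1) - gradedMesh T r N k) / (p : ℝ)))) →
        ∀ D : ℝ → ℝ,
          (∀ t ∈ Set.Ioo (0 : ℝ) T, (∀ k ≤ N, t ≠ gradedMesh T r N k) →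
            HasDerivAt
              (fun τ => ∫ s in (0:ℝ)..τ, rlKernel (1 - α / 2) (τ - s) * (v s - Pv s))
              (D t) t) →
          ∀ n ≤ N,
            (∫ t in (0:ℝ)..(gradedMesh T r N n), (D t) ^ 2)
              ≤ C * ((T / (N : ℝ) ^ r) ^ (1 + 2 * σ - α) * ∑ k ∈ Finset.range n,
                ((k : ℝ) + 1) ^ (r * (1 + 2 * σ - α) - (2 * (r * m) - α) - 1)) := by
  obtain ⟨E, hE0, hE⟩ := exists_graded_interp_error_le hT hr hp hσ0 hσ1 hC₀ hm0 hm
  obtain ⟨B, hB0, hB⟩ := exists_abs_rl_deriv_le (γ := α / 2) (σ := σ) (c := σ - m) (by linarith)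
    (by linarith) hσ0 (by linarith)
  set R : ℝ := (2 ^ r) ^ |σ - m| with hR
  have h2r : (1:ℝ) ≤ 2 ^ r := Real.one_le_rpow one_le_two (by linarith)
  have hR0 : 0 ≤ R := by positivity
  have hr0 : 0 < r := by linarith
  have h1α : 0 < 1 - α := by linarith
  set G : ℝ := B * (E * (1 + R)) with hG
  have hG0 : 0 ≤ G := by positivity
  refine ⟨G ^ 2 * (r ^ (1 - α) / (1 - α)), by positivity, ?_⟩
  intro N hN v Pv hvc hv hv0 hvd hPv D hD n hn
  have hN0 : (0:ℝ) < N := by exact_mod_cast hN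
  set δ : ℝ := T / (N : ℝ) ^ r with hδ
  have hδ0 : 0 < δ := by positivity
  have hmono := gradedMesh_strictMono hT hr hN
  have hx0 : gradedMesh T r N 0 = 0 := gradedMesh_zero hr
  have hxT : ∀ k ≤ N, gradedMesh T r N k ≤ T := fun k hk =>
    (hmono.monotone hk).trans_eq (gradedMesh_self hN)
  have hxnn : ∀ k, 0 ≤ gradedMesh T r N k := fun k => hx0 ▸ hmono.monotone (Nat.zero_le k)
  set η : ℝ → ℝ := fun s => v s - Pv s with hη
  have hηq : ∀ k < N, ContinuousOn η (Set.Icc (gradedMesh T r N k) (gradedMesh T r N (k + 1))) ∧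
      (∀ x ∈ Set.Icc (gradedMesh T r N k) (gradedMesh T r N (k + 1)),
        |η x| ≤ E * (δ ^ σ * ((k : ℝ) + 1) ^ (r * (σ - m)))) ∧
      (∀ x y, gradedMesh T r N k < x → x ≤ y → y ≤ gradedMesh T r N (k + 1) →
        |η y - η x| ≤ E * (δ ^ σ * ((k : ℝ) + 1) ^ (r * (σ - m)))
          * (gradedMesh T r N (k + 1) - gradedMesh T r N k) ^ (-σ)
          * (x - gradedMesh T r N k) ^ (σ - 1) * (y - x)) ∧
      (∀ s ∈ Set.Ioc (gradedMesh T r N k) (gradedMesh T r N (k + 1)),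
        |η s| ≤ E * δ ^ m * s ^ (σ - m)) := by
    intro k hk
    obtain ⟨q, hq, hPq, hnode⟩ := hPv k hk
    obtain ⟨g1, g2, g3⟩ := hE N hN v hv hv0 hvd k hk q hq hnode
    refine ⟨?_, fun x hx => ?_, fun x y hx hxy hy => ?_, fun s hs => ?_⟩
    · refine ContinuousOn.congr (f := fun s => v s - q.eval s) ?_ fun s hs => ?_
      · exact (hvc.mono (Set.Icc_subset_Icc (hxnn k) (hxT (k + 1) hk))).sub
          q.continuous.continuousOn
      · simp only [hη, hPq s hs]
    · simpa only [hη, hPq x hx] using g1 x hx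
    · simpa only [hη, hPq x ⟨hx.le, hxy.trans hy⟩, hPq y ⟨hx.le.trans hxy, hy⟩]
        using g2 x y hx hxy hy
    · simpa only [hη, hPq s ⟨hs.1.le, hs.2⟩] using g3 s hs
  have hpt : ∀ k < N, ∀ t ∈ Set.Ioo (gradedMesh T r N k) (gradedMesh T r N (k + 1)),
      |D t| ≤ G * (δ ^ σ * ((k : ℝ) + 1) ^ (r * (σ - m)))
        * (t - gradedMesh T r N k) ^ (-(α / 2)) := by
    intro k hk t ht
    obtain ⟨-, g1, g2, -⟩ := hηq k hk
    have ht0 : 0 < t := (hxnn k).trans_lt ht.1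
    have hcont : ContinuousOn η (Set.Icc 0 (gradedMesh T r N (k + 1))) := by
      have := continuousOn_Icc_of_mesh hmono.monotone (k + 1)
        fun j (hj : j < k + 1) => (hηq j (by omega)).1
      rwa [hx0] at this
    have hder := hD t ⟨ht0, ht.2.trans_le (hxT (k + 1) hk)⟩ (fun j _ hj => by
      rw [hj] at ht
      have h1 := hmono.lt_iff_lt.mp ht.1
      have h2 := hmono.lt_iff_lt.mp ht.2
      omega)
    have hhist : ∀ s ∈ Set.Ioc 0 (gradedMesh T r N k), |η s| ≤ E * δ ^ m * s ^ (σ - m) := by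
      intro s hs
      obtain ⟨j, hj, hsj⟩ := exists_mem_Ioc_of_mem_Ioc hx0 k hs
      exact (hηq j (by omega)).2.2.2 s hsj
    have hta : 0 < t - gradedMesh T r N k := by linarith [ht.1]
    set M : ℝ := δ ^ σ * ((k : ℝ) + 1) ^ (r * (σ - m)) with hM
    have hM0 : 0 ≤ M := by positivity
    rcases Nat.eq_zero_or_pos k with hk0 | hk1
    · have h := hB _ _ t 0 (E * M) (D t) η (hxnn k) ht.1 ht.2 le_rfl (by positivity) hcont
        (fun s hs => by
          rw [hk0, hx0] at hs
          exact absurd hs (by simp)) g1 g2 hder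
      refine h.trans ?_
      rw [zero_mul, add_zero, hG]
      have : E * M ≤ E * (1 + R) * M := by
        have := mul_nonneg (mul_nonneg hE0 hR0) hM0
        linarith
      rw [mul_assoc B (E * (1 + R)) M]
      gcongr
    · have h := hB _ _ t (E * δ ^ m) (E * M) (D t) η (hxnn k) ht.1 ht.2 (by positivity)
        (by positivity) hcont hhist g1 g2 hder
      refine h.trans ?_
      have hk0 : (0:ℝ) < k := by exact_mod_cast hk1
      have ha : gradedMesh T r N k = δ * (k : ℝ) ^ r := gradedMesh_eq k
      have hb : gradedMesh T r N (k + 1) = δ * ((k : ℝ) + 1) ^ r := by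
        rw [gradedMesh_eq]; push_cast; rfl
      have hb0 : 0 < gradedMesh T r N (k + 1) := ht0.trans ht.2
      have hbt : gradedMesh T r N (k + 1) ≤ 2 ^ r * t := by
        have := add_one_rpow_le hr0.le hk1
        calc gradedMesh T r N (k + 1) ≤ δ * (2 ^ r * (k : ℝ) ^ r) := by rw [hb]; gcongr
          _ = 2 ^ r * gradedMesh T r N k := by rw [ha]; ring
          _ ≤ 2 ^ r * t := by gcongr; exact ht.1.le
      have h3 := rpow_le_of_comparable ht0 hb0 h2r (ht.2.le.trans (by nlinarith)) hbt (σ - m)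
      have h4 : M = δ ^ m * gradedMesh T r N (k + 1) ^ (σ - m) := by
        rw [hM, hb, Real.mul_rpow hδ0.le (by positivity), Real.rpow_mul (by positivity),
          ← mul_assoc, ← Real.rpow_add hδ0]
        congr 2; ring
      have h5 : E * M + E * δ ^ m * t ^ (σ - m) ≤ E * (1 + R) * M := by
        calc _ ≤ E * M + E * δ ^ m * (R * gradedMesh T r N (k + 1) ^ (σ - m)) := by gcongr
          _ = E * M + E * R * (δ ^ m * gradedMesh T r N (k + 1) ^ (σ - m)) := by ring
          _ = _ := by rw [← h4]; ring
      rw [hG, mul_assoc B (E * (1 + R)) M]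
      gcongr
  by_cases hInt : IntervalIntegrable (fun t => D t ^ 2) MeasureTheory.volume 0 (gradedMesh T r N n)
  swap
  · rw [intervalIntegral.integral_undef hInt]
    positivity
  have hsub : ∀ k < n, IntervalIntegrable (fun t => D t ^ 2) MeasureTheory.volume
      (gradedMesh T r N k) (gradedMesh T r N (k + 1)) := fun k hk => hInt.mono_set (by
    rw [Set.uIcc_of_le (hmono.monotone k.le_succ), Set.uIcc_of_le (hxnn n)]
    exact Set.Icc_subset_Icc (hxnn k) (hmono.monotone hk))
  have hsplit := intervalIntegral.sum_integral_adjacent_intervals hsub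
  rw [hx0] at hsplit
  rw [← hsplit, Finset.mul_sum, Finset.mul_sum]
  refine Finset.sum_le_sum fun k hk => ?_
  have hk' : k < n := Finset.mem_range.mp hk
  refine (integral_sq_le_of_abs_le hα1 (hmono.monotone k.le_succ) (hsub k hk')
    (hpt k (by omega))).trans ?_
  have hstep : gradedMesh T r N (k + 1) - gradedMesh T r N k
      ≤ r * (δ * ((k : ℝ) + 1) ^ (r - 1)) := by
    rw [gradedMesh_eq, gradedMesh_eq]
    push_cast
    have := add_one_rpow_sub_rpow_le hr k
    calc _ = δ * (((k : ℝ) + 1) ^ r - (k : ℝ) ^ r) := by rw [hδ]; ring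
      _ ≤ δ * (r * ((k : ℝ) + 1) ^ (r - 1)) := by gcongr
      _ = _ := by ring
  exact graded_interval_weight_le hα1 hr0 hδ0 k
    (sub_nonneg.mpr (hmono.monotone k.le_succ)) hstep

theorem exists_sum_rpow_le_const {e : ℝ} (he : e < 0) :
    ∃ C : ℝ, 0 ≤ C ∧ ∀ n : ℕ, ∑ k ∈ Finset.range n, ((k : ℝ) + 1) ^ (e - 1) ≤ C := by
  have hs : Summable fun k : ℕ => ((k : ℝ) + 1) ^ (e - 1) := by
    have := (summable_nat_add_iff 1).mpr (Real.summable_nat_rpow.mpr (by linarith : e - 1 < -1))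
    simpa using this
  exact ⟨_, tsum_nonneg fun k => by positivity,
    fun n => hs.sum_le_tsum _ fun k _ => by positivity⟩

theorem sum_rpow_neg_one_le (n : ℕ) :
    ∑ k ∈ Finset.range n, ((k : ℝ) + 1) ^ (-1 : ℝ) ≤ 1 + Real.log n := by
  refine le_trans (le_of_eq ?_) (harmonic_le_one_add_log n)
  simp [harmonic, Real.rpow_neg_one]

theorem exists_sum_rpow_le_rpow {e : ℝ} (he : 0 < e) :
    ∃ C : ℝ, 0 ≤ C ∧ ∀ n : ℕ, ∑ k ∈ Finset.range n, ((k : ℝ) + 1) ^ (e - 1) ≤ C * (n : ℝ) ^ e := by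
  rcases le_total 1 e with h1 | h1
  · refine ⟨1, zero_le_one, fun n => ?_⟩
    rcases Nat.eq_zero_or_pos n with rfl | hn
    · simp [Real.zero_rpow he.ne']
    have hn0 : (0:ℝ) < n := by exact_mod_cast hn
    calc _ ≤ ∑ _k ∈ Finset.range n, (n : ℝ) ^ (e - 1) := by
          refine Finset.sum_le_sum fun k hk => Real.rpow_le_rpow (by positivity) ?_ (by linarith)
          exact_mod_cast Finset.mem_range.mp hk
      _ = 1 * (n : ℝ) ^ e := by
          rw [Finset.sum_const, Finset.card_range, nsmul_eq_mul, Real.rpow_sub_one hn0.ne']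
          field_simp
  · refine ⟨1 / e, by positivity, fun n => ?_⟩
    induction n with
    | zero => simp [Real.zero_rpow he.ne']
    | succ n ih =>
      rw [Finset.sum_range_succ]
      have hk : (0:ℝ) < (n : ℝ) + 1 := by positivity
      have h2 : (-1 : ℝ) ≤ -(1 / ((n : ℝ) + 1)) := by
        rw [neg_le_neg_iff, div_le_one hk]; linarith [Nat.cast_nonneg (α := ℝ) n]
      have h := rpow_one_add_le_one_add_mul_self h2 he.le h1
      have h3 : (1 + -(1 / ((n : ℝ) + 1))) = (n : ℝ) / ((n : ℝ) + 1) := by field_simp; ring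
      rw [h3, Real.div_rpow (Nat.cast_nonneg n) hk.le,
        div_le_iff₀ (Real.rpow_pos_of_pos hk _)] at h
      rw [Real.rpow_sub_one hk.ne']
      push_cast
      have e2 : 1 / e * (n : ℝ) ^ e
          ≤ 1 / e * ((1 + e * -(1 / ((n : ℝ) + 1))) * ((n : ℝ) + 1) ^ e) := by gcongr
      have e3 : 1 / e * ((1 + e * -(1 / ((n : ℝ) + 1))) * ((n : ℝ) + 1) ^ e)
          = 1 / e * ((n : ℝ) + 1) ^ e - ((n : ℝ) + 1) ^ e / ((n : ℝ) + 1) := by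
        field_simp; ring
      linarith

/-- The sum over mesh intervals is bounded by `halfDerivBound`, for a suitable decay exponent. -/
theorem exists_weighted_sum_le_halfDerivBound {T α r σ m : ℝ} {p : ℕ} (hT : 0 < T) (hα0 : 0 < α)
    (hα1 : α < 1) (hr : 1 ≤ r) (hσ0 : 0 < σ)
    (hm : m = min (((p : ℝ) + 1) / r) (σ + 1 - α / 4)) :
    ∃ C : ℝ, 0 ≤ C ∧ ∀ N n : ℕ, 1 ≤ N → 1 ≤ n →
      (T / (N : ℝ) ^ r) ^ (1 + 2 * σ - α) * ∑ k ∈ Finset.range n,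
          ((k : ℝ) + 1) ^ (r * (1 + 2 * σ - α) - (2 * (r * m) - α) - 1)
        ≤ C * halfDerivBound T r α σ p N n := by
  have hr0 : 0 < r := by linarith
  set ψ : ℝ := 1 + 2 * σ - α with hψ
  have hψ0 : 0 < ψ := by linarith
  have hδ : ∀ N : ℕ, 1 ≤ N → (T / (N : ℝ) ^ r) ^ ψ = T ^ ψ * (N : ℝ) ^ (-(r * ψ)) := by
    intro N hN
    rw [Real.div_rpow hT.le (by positivity), ← Real.rpow_mul (Nat.cast_nonneg N),
      Real.rpow_neg (Nat.cast_nonneg N), div_eq_mul_inv]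
  set e : ℝ := r * ψ - (2 * (r * m) - α) with he
  have hm_eq : 0 ≤ r * ψ - (2 * (p : ℝ) + 2 - α) → r * m = (p : ℝ) + 1 := by
    intro h0
    have : ((p : ℝ) + 1) / r ≤ σ + 1 - α / 4 := by
      rw [div_le_iff₀ hr0]
      rw [hψ] at h0
      nlinarith
    rw [hm, min_eq_left this, mul_div_cancel₀ _ hr0.ne']
  simp only [halfDerivBound, ← hψ]
  rcases lt_trichotomy r ((2 * (p : ℝ) + 2 - α) / ψ) with hlt | heq | hgt
  · have hneg : r * ψ - (2 * (p : ℝ) + 2 - α) < 0 := by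
      rw [lt_div_iff₀ hψ0] at hlt; linarith
    have he0 : e < 0 := by
      rcases min_choice (((p : ℝ) + 1) / r) (σ + 1 - α / 4) with h | h
      · have : r * m = (p : ℝ) + 1 := by rw [hm, h, mul_div_cancel₀ _ hr0.ne']
        rw [he, this]; linarith
      · rw [he, hm, h, hψ]
        nlinarith
    obtain ⟨C, hC0, hC⟩ := exists_sum_rpow_le_const he0
    refine ⟨T ^ ψ * C, by positivity, fun N n hN _ => ?_⟩
    rw [if_pos hlt, hδ N hN]
    have := hC n
    calc _ ≤ T ^ ψ * (N : ℝ) ^ (-(r * ψ)) * C := by gcongr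
      _ = _ := by ring
  · have h0 : r * ψ = 2 * (p : ℝ) + 2 - α := by rw [eq_div_iff hψ0.ne'] at heq; exact heq
    have he0 : e = 0 := by rw [he, hm_eq (by linarith), h0]; ring
    refine ⟨T ^ ψ, by positivity, fun N n hN _ => ?_⟩
    rw [if_neg heq.not_lt, if_pos heq, hδ N hN, he0, zero_sub, h0,
      show -(2 * (p : ℝ) + 2 - α) = -2 * (p : ℝ) - 2 + α by ring, mul_assoc]
    have := sum_rpow_neg_one_le n
    gcongr
  · have hpos : 0 < r * ψ - (2 * (p : ℝ) + 2 - α) := by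
      rw [div_lt_iff₀ hψ0] at hgt; linarith
    have he1 : e = r * ψ - (2 * (p : ℝ) + 2 - α) := by rw [he, hm_eq hpos.le]; ring
    obtain ⟨C, hC0, hC⟩ := exists_sum_rpow_le_rpow (he1 ▸ hpos : 0 < e)
    refine ⟨T ^ ψ * C / T ^ (e / r), by positivity, fun N n hN hn => ?_⟩
    have hN0 : (0:ℝ) < N := by exact_mod_cast hN
    have hn0 : (0:ℝ) < n := by exact_mod_cast hn
    rw [if_neg hgt.le.not_gt, if_neg hgt.ne', hδ N hN]
    have h1 : ψ - (2 * (p : ℝ) + 2 - α) / r = e / r := by rw [he1]; field_simp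
    have h2 : gradedMesh T r N n ^ (e / r) = (n : ℝ) ^ e * (N : ℝ) ^ (-e) * T ^ (e / r) := by
      rw [gradedMesh, Real.mul_rpow (by positivity) hT.le, ← Real.rpow_mul (by positivity),
        mul_div_cancel₀ _ hr0.ne', Real.div_rpow hn0.le hN0.le, Real.rpow_neg hN0.le,
        div_eq_mul_inv]
    have h3 : (N : ℝ) ^ (-(r * ψ)) = (N : ℝ) ^ (-2 * (p : ℝ) - 2 + α) * (N : ℝ) ^ (-e) := by
      rw [← Real.rpow_add hN0, he1]; congr 1; ring
    rw [h1, h2, h3]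
    have hTe : 0 < T ^ (e / r) := by positivity
    calc _ ≤ T ^ ψ * ((N : ℝ) ^ (-2 * (p : ℝ) - 2 + α) * (N : ℝ) ^ (-e)) * (C * (n : ℝ) ^ e) := by
          have := hC n
          gcongr
      _ = _ := by field_simp

theorem halfDerivBound_nonneg {T r α σ : ℝ} {p N n : ℕ} (hT : 0 < T) :
    0 ≤ halfDerivBound T r α σ p N n := by
  have : 0 ≤ gradedMesh T r N n := by unfold gradedMesh; positivity
  have := Real.log_natCast_nonneg n
  unfold halfDerivBound
  split_ifs <;> positivity

/-- Global `L²` bound for the Riemann–Liouville derivative of order `α/2` of the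
interpolation error: `∫_0^{t_n} ((D_{0+}^{α/2} η_v)(t))² dt ≤ C ⋅ B`, with `C` depending
only on `p, σ, α, r, C₀, T`. -/
theorem rl_half_deriv_interp_error_L2 (T : ℝ) (hT : 0 < T)
    (α : ℝ) (hα0 : 0 < α) (hα1 : α < 1)
    (r : ℝ) (hr : 1 ≤ r) (p : ℕ) (hp : 1 ≤ p)
    (σ C₀ : ℝ) (hσ0 : 0 < σ) (hσ1 : σ < 1) (hσα : σ ≤ (p : ℝ) + ((p : ℝ) + 1) / α)
    (hC₀ : 0 < C₀) :
    ∃ C : ℝ, 0 < C ∧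
      ∀ (N : ℕ), 1 ≤ N → ∀ v Pv : ℝ → ℝ,
        -- regularity of v
        ContinuousOn v (Set.Icc 0 T) →
        ContDiffOn ℝ (p + 1) v (Set.Ioc 0 T) →
        (∀ t ∈ Set.Ioc (0 : ℝ) T, |v t - v 0| ≤ C₀ * t ^ σ) →
        (∀ t ∈ Set.Ioc (0 : ℝ) T, ∀ ℓ ≤ p + 1,
          |iteratedDerivWithin ℓ v (Set.Ioc 0 T) t| ≤ C₀ * (1 + t ^ (σ - (ℓ : ℝ)))) →
        -- Pv is the piecewise Lagrange interpolant of degree p on the graded mesh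
        (∀ k, 1 ≤ k → k ≤ N → ∃ q : Polynomial ℝ, q.degree ≤ p ∧
          (∀ s ∈ Set.Icc (gradedMesh T r N (k - 1)) (gradedMesh T r N k), Pv s = q.eval s) ∧
          (∀ j ≤ p, q.eval (gradedMesh T r N (k - 1) +
              (j : ℝ) * (gradedMesh T r N k - gradedMesh T r N (k - 1)) / (p : ℝ))
            = v (gradedMesh T r N (k - 1) +
              (j : ℝ) * (gradedMesh T r N k - gradedMesh T r N (k - 1)) / (p : ℝ)))) →
        ∀ D : ℝ → ℝ,
          (∀ t ∈ Set.Ioo (0 : ℝ) T, (∀ k ≤ N, t ≠ gradedMesh T r N k) →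
            HasDerivAt
              (fun τ => ∫ s in (0:ℝ)..τ, rlKernel (1 - α / 2) (τ - s) * (v s - Pv s))
              (D t) t) →
          ∀ n, 1 ≤ n → n ≤ N →
            (∫ t in (0:ℝ)..(gradedMesh T r N n), (D t) ^ 2)
              ≤ C * halfDerivBound T r α σ p N n := by
  set m : ℝ := min (((p : ℝ) + 1) / r) (σ + 1 - α / 4) with hm
  have hr0 : 0 < r := by linarith
  have hm0 : 0 < m := lt_min (by positivity) (by linarith)
  have hmp : r * m ≤ p + 1 := by
    calc r * m ≤ r * (((p : ℝ) + 1) / r) := by gcongr; exact min_le_left _ _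
      _ = p + 1 := mul_div_cancel₀ _ hr0.ne'
  have hm1 : m < σ + 1 := (min_le_right _ _).trans_lt (by linarith)
  obtain ⟨A, hA0, hA⟩ := exists_integral_sq_le_sum hT hα0 hα1 hr hp hσ0 hσ1 hC₀ hm0 hmp hm1
  obtain ⟨B, hB0, hB⟩ := exists_weighted_sum_le_halfDerivBound hT hα0 hα1 hr hσ0 hm
  refine ⟨A * B + 1, by positivity, ?_⟩
  intro N hN v Pv hvc hv hv0 hvd hPv D hD n hn hnN
  have h := hA N hN v Pv hvc hv hv0 hvd
    (fun k hk => by simpa using hPv (k + 1) (by omega) (by omega)) D hD n hnN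
  refine h.trans ((mul_le_mul_of_nonneg_left (hB N n hN hn) hA0).trans ?_)
  have := halfDerivBound_nonneg (r := r) (α := α) (σ := σ) (p := p) (N := N) (n := n) hT
  linarith
end

section
/- Let 0 < α < 1, a < T, and let u : [a,T] → ℝ be continuously differentiable. Then for every t ∈ (a,T), the function G(τ) = ∫_a^τ ω_{1−α}(τ−s) u(s) ds is differentiable at t, and G′(t) = (1/Γ(1−α)) ∫_a^t (t−s)^{−α} u′(s) ds + u(a) · (t−a)^{−α}/Γ(1−α); that is, the Riemann–Liouville derivative of u of order α (based at a) equals the Caputo derivative of u of order α (based at a) plus ω_{1−α}(t−a) u(a). -/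
open MeasureTheory Set Filter Topology

/-- Differentiation of the convolution of an integrable kernel with a primitive of a bounded
function which vanishes to the left of `a` and is continuous on `(a, T)`. -/
theorem hasDerivAt_integral_mul_primitive {k h : ℝ → ℝ} {a T t C : ℝ} (ht : t ∈ Ioo a T)
    (hk : IntervalIntegrable k volume 0 (T - a)) (hh : Integrable h)
    (hC : ∀ x, ‖h x‖ ≤ C) (hh_left : ∀ x < a, h x = 0)
    (hh_cont : ∀ x ∈ Ioo a T, ContinuousAt h x) :
    HasDerivAt (fun τ => ∫ r in (0 : ℝ)..(T - a), k r * ∫ s in a..(τ - r), h s)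
      (∫ r in (0 : ℝ)..(T - a), k r * h (t - r)) t := by
  have hC0 : 0 ≤ C := (norm_nonneg _).trans (hC 0)
  have hw_lip : ∀ x y, ‖(∫ s in a..x, h s) - ∫ s in a..y, h s‖ ≤ C * ‖x - y‖ := by
    intro x y
    rw [intervalIntegral.integral_interval_sub_left hh.intervalIntegrable hh.intervalIntegrable]
    exact intervalIntegral.norm_integral_le_of_norm_le_const fun s _ => hC s
  have hw_cont : Continuous fun x => ∫ s in a..x, h s :=
    intervalIntegral.continuous_primitive (fun _ _ => hh.intervalIntegrable) a
  have hw_deriv : ∀ x < T, x ≠ a → HasDerivAt (fun y => ∫ s in a..y, h s) (h x) x := by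
    intro x hxT hxa
    refine intervalIntegral.integral_hasDerivAt_right hh.intervalIntegrable
      hh.aestronglyMeasurable.stronglyMeasurableAtFilter ?_
    rcases lt_or_gt_of_ne hxa with hlt | hgt
    · refine (continuousAt_const (y := (0 : ℝ))).congr ?_
      filter_upwards [Iio_mem_nhds hlt] with y hy using (hh_left y hy).symm
    · exact hh_cont x ⟨hgt, hxT⟩
  have haT : 0 ≤ T - a := by linarith [ht.1, ht.2]
  have h_meas : AEStronglyMeasurable (fun r => h (t - r)) (volume.restrict (uIoc 0 (T - a))) :=
    (hh.comp_sub_left t).aestronglyMeasurable.restrict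
  have hk_meas : AEStronglyMeasurable k (volume.restrict (uIoc 0 (T - a))) :=
    hk.def'.aestronglyMeasurable
  refine (intervalIntegral.hasDerivAt_integral_of_dominated_loc_of_lip
    (F := fun τ r => k r * ∫ s in a..(τ - r), h s) (F' := fun r => k r * h (t - r))
    (bound := fun r => ‖k r‖ * C) (s := univ) univ_mem ?_ ?_ ?_ ?_ ?_ ?_).2
  · exact Eventually.of_forall fun τ => hk_meas.mul
      (hw_cont.comp (continuous_const.sub continuous_id)).aestronglyMeasurable
  · exact hk.mul_continuousOn (hw_cont.comp (continuous_const.sub continuous_id)).continuousOn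
  · exact hk_meas.mul h_meas
  · refine Eventually.of_forall fun r _ => LipschitzOnWith.of_dist_le_mul fun x _ y _ => ?_
    rw [dist_eq_norm, ← mul_sub, norm_mul, dist_eq_norm]
    have := hw_lip (x - r) (y - r)
    rw [sub_sub_sub_cancel_right] at this
    calc _ ≤ ‖k r‖ * (C * ‖x - y‖) := by gcongr
      _ = _ := by
        rw [Real.coe_nnabs, abs_of_nonneg (by positivity)]; ring
  · exact hk.norm.mul_const C
  · filter_upwards [compl_mem_ae_iff.2 (measure_singleton (μ := volume) (t - a))] with r hr hr'
    rw [uIoc_of_le haT] at hr'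
    have hr_ne : t - r ≠ a := fun h => hr (by simp only [mem_singleton_iff]; linarith)
    have := (hw_deriv (t - r) (by linarith [hr'.1, ht.2]) hr_ne).comp_sub_const t r
    exact this.const_mul (k r)

/-- Derivative of the convolution of an integrable kernel `k` with a continuously differentiable
function on `[a, T]`. -/
theorem hasDerivAt_convolution_of_contDiffOn {k u : ℝ → ℝ} {a T t : ℝ} (ht : t ∈ Ioo a T)
    (hk : IntervalIntegrable k volume 0 (T - a)) (hk_cont : ContinuousAt k (t - a))
    (hu : ContDiffOn ℝ 1 u (Icc a T)) :
    HasDerivAt (fun τ => ∫ s in a..τ, k (τ - s) * u s)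
      ((∫ s in a..t, k (t - s) * derivWithin u (Icc a T) s) + u a * k (t - a)) t := by
  have haT : a < T := ht.1.trans ht.2
  have hg : ContinuousOn (derivWithin u (Icc a T)) (Icc a T) :=
    hu.continuousOn_derivWithin (uniqueDiffOn_Icc haT) le_rfl
  obtain ⟨C, hC⟩ := isCompact_Icc.exists_bound_of_continuousOn hg
  have hC0 : 0 ≤ C := (norm_nonneg _).trans (hC a (left_mem_Icc.2 haT.le))
  set h : ℝ → ℝ := (Icc a T).indicator (derivWithin u (Icc a T)) with h_def
  have hh : Integrable h := (integrable_indicator_iff measurableSet_Icc).2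
    hg.integrableOn_Icc
  have hh_bound : ∀ x, ‖h x‖ ≤ C := by
    intro x
    by_cases hx : x ∈ Icc a T
    · rw [h_def, indicator_of_mem hx]; exact hC x hx
    · rw [h_def, indicator_of_notMem hx]; simpa using hC0
  have hh_left : ∀ x < a, h x = 0 := fun x hx =>
    indicator_of_notMem (fun hx' => (hx.trans_le hx'.1).false) _
  have hh_cont : ∀ x ∈ Ioo a T, ContinuousAt h x := fun x hx =>
    (hg.continuousAt (Icc_mem_nhds hx.1 hx.2)).congr <| by
      filter_upwards [Icc_mem_nhds hx.1 hx.2] with y hy using (indicator_of_mem hy _).symm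
  have hw_left : ∀ x ≤ a, ∫ s in a..x, h s = 0 := by
    intro x hx
    refine intervalIntegral.integral_zero_ae ?_
    filter_upwards [compl_mem_ae_iff.2 (measure_singleton (μ := volume) a)] with s hs hs'
    rw [uIoc_of_ge hx] at hs'
    exact hh_left s (lt_of_le_of_ne hs'.2 hs)
  have hu_eq : ∀ x ∈ Icc a T, u x = u a + ∫ s in a..x, h s := by
    intro x hx
    rw [intervalIntegral.integral_eq_sub_of_hasDerivAt_of_le hx.1
      (hu.continuousOn.mono (Icc_subset_Icc_right hx.2)) ?_ hh.intervalIntegrable]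
    · ring
    · intro y hy
      have hy' : y ∈ Ioo a T := ⟨hy.1, hy.2.trans_le hx.2⟩
      rw [h_def, indicator_of_mem (Ioo_subset_Icc_self hy')]
      exact ((hu.differentiableOn one_ne_zero y
        (Ioo_subset_Icc_self hy')).hasDerivWithinAt).hasDerivAt (Icc_mem_nhds hy'.1 hy'.2)
  have h_sub : ∀ τ ∈ Ioo a T, IntervalIntegrable k volume 0 (τ - a) := by
    intro τ hτ
    refine hk.mono_set ?_
    rw [uIcc_of_le (by linarith [hτ.1]), uIcc_of_le (by linarith)]
    exact Icc_subset_Icc_right (by linarith [hτ.2])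
  have h_trunc : ∀ τ ∈ Ioo a T, ∀ f : ℝ → ℝ, (∀ r, τ - a < r → f r = 0) →
      ∫ r in (0 : ℝ)..(T - a), f r = ∫ r in (0 : ℝ)..(τ - a), f r := by
    intro τ hτ f hf
    rw [intervalIntegral.integral_of_le (by linarith), intervalIntegral.integral_of_le
      (by linarith [hτ.1])]
    refine setIntegral_eq_of_subset_of_forall_sdiff_eq_zero measurableSet_Ioc
      (Ioc_subset_Ioc_right (by linarith [hτ.2])) fun r hr => hf r ?_
    by_contra hle
    exact hr.2 ⟨hr.1.1, not_lt.1 hle⟩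
  have h_refl : ∀ (τ : ℝ) (f : ℝ → ℝ),
      ∫ s in a..τ, k (τ - s) * f s = ∫ r in (0 : ℝ)..(τ - a), k r * f (τ - r) := by
    intro τ f
    have := intervalIntegral.integral_comp_sub_left (a := a) (b := τ)
      (fun r => k r * f (τ - r)) τ
    simpa using this
  have h_first : HasDerivAt (fun τ => ∫ r in (0 : ℝ)..(τ - a), k r) (k (t - a)) t := by
    have hmeas : StronglyMeasurableAtFilter k (𝓝 (t - a)) volume := by
      refine ⟨Ioc 0 (T - a), ?_, hk.1.aestronglyMeasurable⟩
      exact Ioc_mem_nhds (by linarith [ht.1]) (by linarith [ht.2])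
    exact (intervalIntegral.integral_hasDerivAt_right (h_sub t ht) hmeas
      hk_cont).comp_sub_const t a
  have h_second := hasDerivAt_integral_mul_primitive ht hk hh hh_bound hh_left hh_cont
  have h_val : ∫ r in (0 : ℝ)..(T - a), k r * h (t - r) =
      ∫ s in a..t, k (t - s) * derivWithin u (Icc a T) s := by
    rw [h_trunc t ht _ fun r hr => by rw [hh_left _ (by linarith), mul_zero], ← h_refl]
    refine intervalIntegral.integral_congr fun s hs => ?_
    rw [uIcc_of_le ht.1.le] at hs
    simp only [h_def, indicator_of_mem (Icc_subset_Icc_right ht.2.le hs)]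
  rw [← h_val, add_comm]
  refine ((h_first.const_mul (u a)).add h_second).congr_of_eventuallyEq ?_
  filter_upwards [Ioo_mem_nhds ht.1 ht.2] with τ hτ
  have hkτ := h_sub τ hτ
  have hw_cont : Continuous fun r => ∫ s in a..(τ - r), h s :=
    (intervalIntegral.continuous_primitive (fun _ _ => hh.intervalIntegrable) a).comp
      (continuous_const.sub continuous_id)
  simp only [Pi.add_apply]
  rw [h_refl, h_trunc τ hτ _ fun r hr => by rw [hw_left _ (by linarith), mul_zero],
    ← intervalIntegral.integral_const_mul,
    ← intervalIntegral.integral_add (hkτ.const_mul _) (hkτ.mul_continuousOn hw_cont.continuousOn)]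
  refine intervalIntegral.integral_congr fun r hr => ?_
  rw [uIcc_of_le (by linarith [hτ.1])] at hr
  simp only [hu_eq (τ - r) ⟨by linarith [hr.2], by linarith [hr.1, hτ.2]⟩]
  ring

/-- Relation between Riemann–Liouville and Caputo derivatives based at `a`: for
`u` continuously differentiable on `[a,T]` and `t ∈ (a,T)`, the map
`τ ↦ ∫_a^τ ω_{1-α}(τ-s) u(s) ds` is differentiable at `t` with derivative
`(1/Γ(1-α)) ∫_a^t (t-s)^{-α} u'(s) ds + u(a)(t-a)^{-α}/Γ(1-α)`. -/
theorem rl_eq_caputo_plus_initial (α a T : ℝ) (hα0 : 0 < α) (hα1 : α < 1) (haT : a < T)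
    (u : ℝ → ℝ) (hu : ContDiffOn ℝ 1 u (Set.Icc a T)) :
    ∀ t ∈ Set.Ioo a T,
      HasDerivAt (fun τ => ∫ s in a..τ, rlKernel (1 - α) (τ - s) * u s)
        ((1 / Real.Gamma (1 - α)) *
            (∫ s in a..t, (t - s) ^ (-α) * derivWithin u (Set.Icc a T) s)
          + u a * (t - a) ^ (-α) / Real.Gamma (1 - α)) t := by
  intro t ht
  have hk : IntervalIntegrable (rlKernel (1 - α)) MeasureTheory.volume 0 (T - a) :=
    (intervalIntegral.intervalIntegrable_rpow' (by linarith)).div_const _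
  have hk_cont : ContinuousAt (rlKernel (1 - α)) (t - a) :=
    (Real.continuousAt_rpow_const _ _ (Or.inl (by linarith [ht.1]))).div_const _
  convert hasDerivAt_convolution_of_contDiffOn ht hk hk_cont hu using 1
  have hexp : 1 - α - 1 = -α := by ring
  simp only [rlKernel, hexp, ← intervalIntegral.integral_const_mul]
  congr 1
  · refine intervalIntegral.integral_congr fun s _ => ?_
    ring
  · ring
end
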